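/- Let (X,T) be a topological dynamical system with a compatible metric d. Then the lower metric mean dimension satisfies mdim_M^-(T,X,d) = liminf_{ε→0} [ sup_{μ∈E(X,T)} R_{μ,L∞}(ε) ] / log(1/ε), where the supremum is over all ergodic T-invariant Borel probability measures. -/

import Mathlib

open Filter MeasureTheory Set
open scoped ENNReal Topology

noncomputable section

namespace MMD

variable {X : Type*}

/-- The `n`-th Bowen metric `d_n(x,y) = max_{0 ≤ j ≤ n-1} d(T^j x, T^j y)`. -/
noncomputable def bowenDist [PseudoMetricSpace X] (T : X → X) (n : ℕ) (x y : X) : ℝ :=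
  ⨆ j : Fin n, dist (T^[(j : ℕ)] x) (T^[(j : ℕ)] y)

/-- `r_n(T,d,ε,Z)`: minimal cardinality of an `(n,ε)`-spanning set of `Z`. -/
noncomputable def spanNum [PseudoMetricSpace X] (T : X → X) (n : ℕ) (ε : ℝ) (Z : Set X) : ℕ :=
  sInf {k | ∃ E : Finset X, E.card = k ∧ ∀ z ∈ Z, ∃ y ∈ E, bowenDist T n z y < ε}

/-- `s_n(T,d,ε,Z)`: maximal cardinality of an `(n,ε)`-separated subset of `Z`. -/
noncomputable def sepNum [PseudoMetricSpace X] (T : X → X) (n : ℕ) (ε : ℝ) (Z : Set X) : ℕ :=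
  sSup {k | ∃ F : Finset X, ↑F ⊆ Z ∧ F.card = k ∧
    ∀ x ∈ F, ∀ y ∈ F, x ≠ y → ε ≤ bowenDist T n x y}

/-- `limsup_{n→∞} (1/n) log r_n(T,d,ε,X)`. -/
noncomputable def spanGrowth [PseudoMetricSpace X] (T : X → X) (ε : ℝ) : ℝ≥0∞ :=
  Filter.limsup (fun n : ℕ => ENNReal.ofReal (Real.log (spanNum T n ε Set.univ)) / (n : ℝ≥0∞))
    Filter.atTop

/-- Upper metric mean dimension. -/
noncomputable def mdimMUpper [PseudoMetricSpace X] (T : X → X) : ℝ≥0∞ :=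
  Filter.limsup (fun ε : ℝ => spanGrowth T ε / ENNReal.ofReal (Real.log (1 / ε)))
    (nhdsWithin 0 (Set.Ioi 0))

/-- Lower metric mean dimension. -/
noncomputable def mdimMLower [PseudoMetricSpace X] (T : X → X) : ℝ≥0∞ :=
  Filter.liminf (fun ε : ℝ => spanGrowth T ε / ENNReal.ofReal (Real.log (1 / ε)))
    (nhdsWithin 0 (Set.Ioi 0))

/-- A finite (Borel) partition given as a finite set of measurable, pairwise disjoint sets
covering the space. -/
def IsFinPartition {Y : Type*} [MeasurableSpace Y] (P : Finset (Set Y)) : Prop :=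
  (∀ s ∈ P, MeasurableSet s) ∧ (∀ s ∈ P, ∀ t ∈ P, s ≠ t → Disjoint s t) ∧
    ⋃₀ (P : Set (Set Y)) = Set.univ

/-- Mutual information `I(ξ;η)` of two random variables, as the supremum over finite
measurable partitions of the target spaces. -/
noncomputable def mutualInfo {Ω A B : Type*} [MeasurableSpace Ω] [MeasurableSpace A]
    [MeasurableSpace B] (P : Measure Ω) (ξ : Ω → A) (η : Ω → B) : ℝ≥0∞ :=
  ⨆ (p : Finset (Set A)) (_ : IsFinPartition p) (q : Finset (Set B)) (_ : IsFinPartition q),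
    ENNReal.ofReal (∑ s ∈ p, ∑ t ∈ q,
      (P (ξ ⁻¹' s ∩ η ⁻¹' t)).toReal *
        Real.log ((P (ξ ⁻¹' s ∩ η ⁻¹' t)).toReal /
          ((P (ξ ⁻¹' s)).toReal * (P (η ⁻¹' t)).toReal)))

/-- The `L^∞` rate distortion function `R_{μ,L∞}(ε,s)`: the infimum of `I(ξ;η)/n` over all
`n ≥ 1` and all joint distributions `ν` of `(ξ, (η_0,…,η_{n-1}))` such that `ξ` has law `μ`,
the `η_k` take (almost surely) finitely many values, and
`E(#{0 ≤ k ≤ n-1 : d(T^k ξ, η_k) ≥ ε}) < s n`. -/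
noncomputable def RDistLInftyS [PseudoMetricSpace X] [MeasurableSpace X] (T : X → X)
    (μ : Measure X) (ε s : ℝ) : ℝ≥0∞ :=
  ⨅ (n : ℕ) (_ : 0 < n) (ν : Measure (X × (Fin n → X))) (_ : IsProbabilityMeasure ν)
    (_ : ν.map Prod.fst = μ) (_ : ∃ S : Finset X, ν {p | ∀ k, p.2 k ∈ S} = 1)
    (_ : ∫⁻ p, (Nat.card {k : Fin n // ε ≤ dist (T^[(k : ℕ)] p.1) (p.2 k)} : ℝ≥0∞) ∂ν
        < ENNReal.ofReal (s * n)),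
    mutualInfo ν Prod.fst Prod.snd / (n : ℝ≥0∞)

/-- `R_{μ,L∞}(ε) = lim_{s→0} R_{μ,L∞}(ε,s)` (the limit equals the supremum over `s > 0`
by monotonicity). -/
noncomputable def RDistLInfty [PseudoMetricSpace X] [MeasurableSpace X] (T : X → X)
    (μ : Measure X) (ε : ℝ) : ℝ≥0∞ :=
  ⨆ (s : ℝ) (_ : 0 < s), RDistLInftyS T μ ε s

/-- The `L¹` rate distortion function `R_{μ,1}(ε)`. -/
noncomputable def RDistL1 [PseudoMetricSpace X] [MeasurableSpace X] (T : X → X)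
    (μ : Measure X) (ε : ℝ) : ℝ≥0∞ :=
  ⨅ (n : ℕ) (_ : 0 < n) (ν : Measure (X × (Fin n → X))) (_ : IsProbabilityMeasure ν)
    (_ : ν.map Prod.fst = μ) (_ : ∃ S : Finset X, ν {p | ∀ k, p.2 k ∈ S} = 1)
    (_ : ∫⁻ p, ∑ k : Fin n, ENNReal.ofReal (dist (T^[(k : ℕ)] p.1) (p.2 k)) ∂ν
        < ENNReal.ofReal (ε * n)),
    mutualInfo ν Prod.fst Prod.snd / (n : ℝ≥0∞)

/-- `R^δ_μ(T,n,ε)`: minimal number of Bowen `(n,ε)`-balls whose union has `μ`-measure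
greater than `1 - δ`. -/
noncomputable def katokNum [PseudoMetricSpace X] [MeasurableSpace X] (T : X → X)
    (μ : Measure X) (n : ℕ) (ε δ : ℝ) : ℕ :=
  sInf {k | ∃ E : Finset X, E.card = k ∧
    ENNReal.ofReal (1 - δ) < μ (⋃ x ∈ E, {y | bowenDist T n x y < ε})}

/-- `h̄^K_μ(T,ε,δ)`. -/
noncomputable def katokUpperD [PseudoMetricSpace X] [MeasurableSpace X] (T : X → X)
    (μ : Measure X) (ε δ : ℝ) : ℝ≥0∞ :=
  Filter.limsup (fun n : ℕ => ENNReal.ofReal (Real.log (katokNum T μ n ε δ)) / (n : ℝ≥0∞))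
    Filter.atTop

/-- `ḥ^K_μ(T,ε,δ)`. -/
noncomputable def katokLowerD [PseudoMetricSpace X] [MeasurableSpace X] (T : X → X)
    (μ : Measure X) (ε δ : ℝ) : ℝ≥0∞ :=
  Filter.liminf (fun n : ℕ => ENNReal.ofReal (Real.log (katokNum T μ n ε δ)) / (n : ℝ≥0∞))
    Filter.atTop

/-- `h̄^K_μ(T,ε) = lim_{δ→0} h̄^K_μ(T,ε,δ)` (equal to the supremum over `δ ∈ (0,1)` by
monotonicity). -/
noncomputable def katokUpper [PseudoMetricSpace X] [MeasurableSpace X] (T : X → X)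
    (μ : Measure X) (ε : ℝ) : ℝ≥0∞ :=
  ⨆ (δ : ℝ) (_ : δ ∈ Set.Ioo (0 : ℝ) 1), katokUpperD T μ ε δ

/-- `ḥ^K_μ(T,ε) = lim_{δ→0} ḥ^K_μ(T,ε,δ)`. -/
noncomputable def katokLower [PseudoMetricSpace X] [MeasurableSpace X] (T : X → X)
    (μ : Measure X) (ε : ℝ) : ℝ≥0∞ :=
  ⨆ (δ : ℝ) (_ : δ ∈ Set.Ioo (0 : ℝ) 1), katokLowerD T μ ε δ

/-- The empirical measure `(1/n) Σ_{j=0}^{n-1} δ_{T^j x}`. -/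
noncomputable def empMeas [MeasurableSpace X] (T : X → X) (n : ℕ) (x : X) : Measure X :=
  (n : ℝ≥0∞)⁻¹ • ∑ j ∈ Finset.range n, Measure.dirac (T^[j] x)

/-- Pfister–Sullivan entropy `PS_μ(T,d,ε)`: infimum over weak* open neighborhoods `F` of `μ`
of `limsup_n (1/n) log s_n(T,d,ε,X_{n,F})`, where
`X_{n,F} = {x : (1/n) Σ_{j<n} δ_{T^j x} ∈ F}`. -/
noncomputable def PSent [MetricSpace X] [MeasurableSpace X] [OpensMeasurableSpace X]
    (T : X → X) (μ : ProbabilityMeasure X) (ε : ℝ) : ℝ≥0∞ :=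
  ⨅ (F : Set (ProbabilityMeasure X)) (_ : IsOpen F) (_ : μ ∈ F),
    Filter.limsup (fun n : ℕ => ENNReal.ofReal (Real.log (sepNum T n ε
      {x : X | ∃ h : IsProbabilityMeasure (empMeas T n x),
        (⟨empMeas T n x, h⟩ : ProbabilityMeasure X) ∈ F})) / (n : ℝ≥0∞)) Filter.atTop

/-- Partition entropy `H_μ(P) = Σ_{A∈P} -μ(A) log μ(A)`. -/
noncomputable def entP [MeasurableSpace X] (μ : Measure X) (P : Finset (Set X)) : ℝ≥0∞ :=
  ∑ A ∈ P, ENNReal.ofReal (-((μ A).toReal * Real.log ((μ A).toReal)))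

/-- The join `P^n = ∨_{j=0}^{n-1} T^{-j} P`. -/
noncomputable def joinN (T : X → X) (P : Finset (Set X)) (n : ℕ) : Finset (Set X) :=
  letI : DecidableEq (Set X) := Classical.decEq _
  (Fintype.piFinset (fun _ : Fin n => P)).image (fun f => ⋂ j : Fin n, T^[(j : ℕ)] ⁻¹' f j)

/-- `h_μ(T,P) = lim_n H_μ(P^n)/n` (the limit exists and equals the liminf). -/
noncomputable def entRate [MeasurableSpace X] (T : X → X) (μ : Measure X)
    (P : Finset (Set X)) : ℝ≥0∞ :=
  Filter.liminf (fun n : ℕ => entP μ (joinN T P n) / (n : ℝ≥0∞)) Filter.atTop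

/-- `inf { h_μ(T,P) : P a finite Borel partition with diam P ≤ ε }`. -/
noncomputable def infEntRate [PseudoMetricSpace X] [MeasurableSpace X] (T : X → X)
    (μ : Measure X) (ε : ℝ) : ℝ≥0∞ :=
  ⨅ (P : Finset (Set X)) (_ : IsFinPartition P) (_ : ∀ s ∈ P, Metric.diam s ≤ ε),
    entRate T μ P

/-- Kolmogorov–Sinai entropy `h_μ(T)`. -/
noncomputable def ksEntropy [MeasurableSpace X] (T : X → X) (μ : Measure X) : ℝ≥0∞ :=
  ⨆ (P : Finset (Set X)) (_ : IsFinPartition P), entRate T μ P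

/-- A finite open cover. -/
def IsFinOpenCover [TopologicalSpace X] (α : Finset (Set X)) : Prop :=
  (∀ A ∈ α, IsOpen A) ∧ ⋃₀ (α : Set (Set X)) = Set.univ

/-- `ord(β) = max_x #{B ∈ β : x ∈ B} - 1`. -/
noncomputable def ordCover (β : Finset (Set X)) : ℕ :=
  sSup {k | ∃ x : X, Nat.card {B : Set X // B ∈ β ∧ x ∈ B} = k} - 1

/-- `D(α) = min_{β ≻ α} ord(β)`, over finite open covers `β` refining `α`. -/
noncomputable def Dcover [TopologicalSpace X] (α : Finset (Set X)) : ℕ :=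
  sInf {k | ∃ β : Finset (Set X), IsFinOpenCover β ∧ (∀ B ∈ β, ∃ A ∈ α, B ⊆ A) ∧
    ordCover β = k}

/-- Mean (topological) dimension `mdim(X,T) = sup_α lim_n D(α^n)/n`. -/
noncomputable def mdimTop [TopologicalSpace X] (T : X → X) : ℝ≥0∞ :=
  ⨆ (α : Finset (Set X)) (_ : IsFinOpenCover α),
    Filter.liminf (fun n : ℕ => (Dcover (joinN T α n) : ℝ≥0∞) / (n : ℝ≥0∞)) Filter.atTop

/-- The marker property for a homeomorphism. -/
def MarkerProperty [TopologicalSpace X] (T : X ≃ₜ X) : Prop :=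
  ∀ N : ℕ, 0 < N → ∃ U : Set X, IsOpen U ∧
    (∀ n : ℕ, 1 ≤ n → n ≤ N → U ∩ (⇑T)^[n] '' U = ∅) ∧
    ⋃ n : ℤ, ⇑(T.toEquiv ^ n) '' U = Set.univ

/-- Upper dimension `limsup_{ε→0} F(μ,ε)/log(1/ε)` associated with a candidate `F`. -/
noncomputable def dimFUpper [MeasurableSpace X] (F : Measure X → ℝ → ℝ≥0∞)
    (μ : Measure X) : ℝ≥0∞ :=
  Filter.limsup (fun ε : ℝ => F μ ε / ENNReal.ofReal (Real.log (1 / ε)))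
    (nhdsWithin 0 (Set.Ioi 0))

/-- Lower dimension `liminf_{ε→0} F(μ,ε)/log(1/ε)` associated with a candidate `F`. -/
noncomputable def dimFLower [MeasurableSpace X] (F : Measure X → ℝ → ℝ≥0∞)
    (μ : Measure X) : ℝ≥0∞ :=
  Filter.liminf (fun ε : ℝ => F μ ε / ENNReal.ofReal (Real.log (1 / ε)))
    (nhdsWithin 0 (Set.Ioi 0))

/-- A candidate function: for each invariant probability measure `μ`, `F(μ,·)` is
non-decreasing as `ε` decreases, and `F(μ,ε) → h_μ(T)` as `ε → 0⁺`. -/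
def IsCandidate [MeasurableSpace X] (T : X → X) (F : Measure X → ℝ → ℝ≥0∞) : Prop :=
  ∀ μ : Measure X, IsProbabilityMeasure μ → MeasurePreserving T μ μ →
    (∀ ε₁ ε₂ : ℝ, 0 < ε₁ → ε₁ ≤ ε₂ → F μ ε₂ ≤ F μ ε₁) ∧
    Filter.Tendsto (F μ) (nhdsWithin 0 (Set.Ioi 0)) (nhds (ksEntropy T μ))

end MMD

open MMD

/-!
Coding the orbit of a point by the nearest orbit in a Bowen-spanning set has no distortion, so
`RDistLInfty T μ ε ≤ spanGrowth T ε` for every `μ`.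

For the other inequality, let `c` be a continuous cost with values in `[0, l]` which vanishes when
`dist x y ≤ ε` and equals `l` when `2 * ε ≤ dist x y`. A convex combination `W` of the weights
`exp (-cost (·, word))` acts as a block code with description length `-log W`. By the
Donsker–Varadhan inequality the best mean description length per letter is at most the rate
distortion function of `μ`. Being an infimum of continuous affine functions of `μ` it is upper
semicontinuous, and it is convex because averaging two long codes costs a bounded number of nats. By
Bauer's maximum principle its maximum over the invariant measures is attained at an extreme point,
that is, at an ergodic measure. Hence, if `R` bounds the ergodic rate distortion functions, every
invariant measure has a code of rate close to `R`. By compactness a single code serves all of them,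
and so serves the empirical measures of all long orbit segments. Concatenating it along a segment,
and averaging over the phase of the cuts, describes every point by at most `n * (R + 1)` nats for
large `n`. On a `4 * ε`-separated set the weights of a word have sum at most `exp n` once `l` is the
logarithm of the size of an `ε`-net, so that `spanGrowth T (4 * ε) ≤ R + 2`. The constants `4` and
`2` disappear after division by `log (1 / ε)`.
-/

namespace MMD

open scoped NNReal

section MaximumPrinciple

variable {𝕜 E β : Type*} [LinearOrder β] {K F : Set E} {f Ψ : E → β}

lemma isCompact_setOf_isMaxOn [TopologicalSpace E] (hF : IsCompact F)
    (hf : UpperSemicontinuousOn f F) :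
    IsCompact {x ∈ F | IsMaxOn f F x} := by
  rcases F.eq_empty_or_nonempty with rfl | hne
  · simp
  obtain ⟨m, hmF, hm⟩ := hf.exists_isMaxOn hne hF
  convert hf.isCompact_inter_preimage_Ici hF (f m) using 1
  ext x
  exact and_congr_right fun _ ↦ ⟨fun hx ↦ hx hmF, fun hx _ hy ↦ (hm hy).trans hx⟩

variable [Semiring 𝕜] [PartialOrder 𝕜] [AddCommMonoid E] [Module 𝕜 E] [AddCommMonoid β]
  [IsOrderedCancelAddMonoid β] [Module 𝕜 β] [PosSMulStrictMono 𝕜 β]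

lemma isExtreme_setOf_isMaxOn (hf : ConvexOn 𝕜 K f) (hF : IsExtreme 𝕜 K F) :
    IsExtreme 𝕜 K {x ∈ F | IsMaxOn f F x} := by
  refine hF.trans ⟨sep_subset _ _, ?_⟩
  rintro x hx y hy z ⟨-, hz⟩ hzxy
  have hzx : f z ≤ f x := by
    by_contra! h
    exact (hf.lt_right_of_left_lt (hF.subset hx) (hF.subset hy) hzxy h).not_ge (hz hy)
  exact ⟨hx, fun w hw ↦ (hz hw).trans hzx⟩

variable [TopologicalSpace E] [T2Space E]

lemma exists_minimal_isExtreme_isCompact (hF : IsCompact F) (hne : F.Nonempty)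
    (hKF : IsExtreme 𝕜 K F) :
    ∃ M ⊆ F, Minimal (· ∈ {A : Set E | A.Nonempty ∧ IsCompact A ∧ IsExtreme 𝕜 K A}) M := by
  refine zorn_superset_nonempty _ (fun C hC hchain hCne ↦ ?_) F ⟨hne, hF, hKF⟩
  have : Nonempty C := hCne.to_subtype
  have hdir : DirectedOn (· ⊇ ·) C := fun A hA B hB ↦ (hchain.total hA hB).elim
    (fun h ↦ ⟨A, hA, subset_rfl, h⟩) (fun h ↦ ⟨B, hB, h, subset_rfl⟩)
  refine ⟨⋂₀ C, ⟨?_, ?_, ?_⟩, fun A hA ↦ sInter_subset_of_mem hA⟩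
  · exact IsCompact.nonempty_sInter_of_directed_nonempty_isCompact_isClosed
      hdir (fun A hA ↦ (hC hA).1) (fun A hA ↦ (hC hA).2.1)
      (fun A hA ↦ (hC hA).2.1.isClosed)
  · obtain ⟨A, hA⟩ := hCne
    exact (hC hA).2.1.of_isClosed_subset
      (isClosed_sInter fun B hB ↦ (hC hB).2.1.isClosed) (sInter_subset_of_mem hA)
  · exact isExtreme_sInter hCne fun A hA ↦ (hC hA).2.2

lemma exists_mem_extremePoints_of_isExtreme (hF : IsCompact F) (hne : F.Nonempty)
    (hKF : IsExtreme 𝕜 K F)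
    (hsep : ∀ x ∈ K, ∀ y ∈ K, x ≠ y →
      ∃ f : E → β, UpperSemicontinuousOn f K ∧ ConvexOn 𝕜 K f ∧ f x ≠ f y) :
    ∃ x ∈ F, x ∈ extremePoints 𝕜 K := by
  obtain ⟨M, hMF, ⟨⟨x, hx⟩, hMc, hKM⟩, hmin⟩ := exists_minimal_isExtreme_isCompact hF hne hKF
  suffices hM : M = {x} from ⟨x, hMF hx, isExtreme_singleton.1 (hM ▸ hKM)⟩
  refine eq_singleton_iff_unique_mem.2 ⟨hx, fun y hy ↦ ?_⟩
  by_contra hyx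
  obtain ⟨f, hfc, hf, hfyx⟩ := hsep y (hKM.subset hy) x (hKM.subset hx) hyx
  have hfM := hfc.mono hKM.subset
  have hmax : ∀ z ∈ M, IsMaxOn f M z := fun z hz ↦
    (hmin ⟨hfM.exists_isMaxOn ⟨x, hx⟩ hMc, isCompact_setOf_isMaxOn hMc hfM,
      isExtreme_setOf_isMaxOn hf hKM⟩ (sep_subset _ _) hz).2
  exact hfyx ((hmax x hx hy).antisymm (hmax y hy hx))

/-- Bauer's maximum principle. -/
theorem exists_mem_extremePoints_isMaxOn (hK : IsCompact K) (hne : K.Nonempty)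
    (hΨc : UpperSemicontinuousOn Ψ K) (hΨ : ConvexOn 𝕜 K Ψ)
    (hsep : ∀ x ∈ K, ∀ y ∈ K, x ≠ y →
      ∃ f : E → β, UpperSemicontinuousOn f K ∧ ConvexOn 𝕜 K f ∧ f x ≠ f y) :
    ∃ x ∈ extremePoints 𝕜 K, IsMaxOn Ψ K x := by
  obtain ⟨x, ⟨-, hxmax⟩, hx⟩ := exists_mem_extremePoints_of_isExtreme
    (isCompact_setOf_isMaxOn hK hΨc) (hΨc.exists_isMaxOn hne hK)
    (isExtreme_setOf_isMaxOn hΨ (IsExtreme.refl 𝕜 K)) hsep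
  exact ⟨x, hx, hxmax⟩

end MaximumPrinciple

section ExpMixtures

variable {α β ι : Type*} {c : α → β → ℝ} {W : α → ℝ}

/-- The convex hull of the weights `exp (-c(·, b))`. For a cost function `c` and `W` in this set,
`-log (W x)` plays the role of the length, in nats, of a lossy description of `x`. -/
def expMixtures (c : α → β → ℝ) : Set (α → ℝ) :=
  convexHull ℝ (range fun b a ↦ Real.exp (-c a b))

lemma expMixtures_subset {S : Set (α → ℝ)} (hS : Convex ℝ S)
    (h : ∀ b, (fun a ↦ Real.exp (-c a b)) ∈ S) : expMixtures c ⊆ S :=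
  convexHull_min (range_subset_iff.2 h) hS

lemma convex_expMixtures : Convex ℝ (expMixtures c) := convex_convexHull ℝ _

lemma exp_neg_mem_expMixtures (b : β) : (fun a ↦ Real.exp (-c a b)) ∈ expMixtures c :=
  subset_convexHull ℝ _ ⟨b, rfl⟩

lemma nonempty_expMixtures [Nonempty β] : (expMixtures c).Nonempty :=
  ⟨_, exp_neg_mem_expMixtures (Classical.arbitrary β)⟩

lemma convex_setOf_apply_mem {s : Set ℝ} (hs : Convex ℝ s) (x : α) :
    Convex ℝ {W : α → ℝ | W x ∈ s} :=
  hs.linear_preimage (LinearMap.proj (R := ℝ) (φ := fun _ : α ↦ ℝ) x)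

lemma expMixtures_pos (hW : W ∈ expMixtures c) (x : α) : 0 < W x :=
  expMixtures_subset (convex_setOf_apply_mem (convex_Ioi 0) x) (fun _ ↦ Real.exp_pos _) hW

lemma expMixtures_le_one {x : α} (hc : ∀ b, 0 ≤ c x b) (hW : W ∈ expMixtures c) : W x ≤ 1 :=
  expMixtures_subset (convex_setOf_apply_mem (convex_Iic 1) x)
    (fun b ↦ Real.exp_le_one_iff.2 (neg_nonpos.2 (hc b))) hW

lemma exp_neg_le_expMixtures {x : α} {L : ℝ} (hc : ∀ b, c x b ≤ L) (hW : W ∈ expMixtures c) :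
    Real.exp (-L) ≤ W x :=
  expMixtures_subset (convex_setOf_apply_mem (convex_Ici _) x)
    (fun b ↦ Real.exp_le_exp.2 (neg_le_neg (hc b))) hW

lemma neg_log_expMixtures_nonneg {x : α} (hc : ∀ b, 0 ≤ c x b) (hW : W ∈ expMixtures c) :
    0 ≤ -Real.log (W x) :=
  neg_nonneg.2 (Real.log_nonpos (expMixtures_pos hW x).le (expMixtures_le_one hc hW))

lemma neg_log_expMixtures_le {x : α} {L : ℝ} (hc : ∀ b, c x b ≤ L) (hW : W ∈ expMixtures c) :
    -Real.log (W x) ≤ L := by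
  have := (Real.le_log_iff_exp_le (expMixtures_pos hW x)).2 (exp_neg_le_expMixtures hc hW)
  linarith

lemma continuous_expMixtures [TopologicalSpace α] (hc : ∀ b, Continuous (c · b))
    (hW : W ∈ expMixtures c) : Continuous W := by
  refine expMixtures_subset (S := {W | Continuous W}) ?_ (fun b ↦ (hc b).neg.rexp) hW
  intro U hU V hV a b _ _ _
  exact (hU.const_smul a).add (hV.const_smul b)

lemma continuous_neg_log_expMixtures [TopologicalSpace α] (hc : ∀ b, Continuous (c · b))
    (hW : W ∈ expMixtures c) : Continuous fun x ↦ -Real.log (W x) :=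
  ((continuous_expMixtures hc hW).log fun x ↦ (expMixtures_pos hW x).ne').neg

lemma neg_log_expMixtures_le_add {x x' : α} {δ : ℝ} (hc : ∀ b, c x b ≤ c x' b + δ)
    (hW : W ∈ expMixtures c) : -Real.log (W x) ≤ -Real.log (W x') + δ := by
  have hx' : Real.exp (-δ) * W x' ≤ W x := by
    refine expMixtures_subset (S := {W | Real.exp (-δ) * W x' ≤ W x}) ?_ (fun b ↦ ?_) hW
    · have := (convex_Ici (0 : ℝ)).linear_preimage
        (LinearMap.proj (R := ℝ) (φ := fun _ : α ↦ ℝ) x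
          - Real.exp (-δ) • LinearMap.proj (R := ℝ) (φ := fun _ : α ↦ ℝ) x')
      simpa [preimage] using this
    · rw [mem_ofPred_eq, ← Real.exp_add, Real.exp_le_exp]
      linarith [hc b]
  have := Real.log_le_log (mul_pos (Real.exp_pos _) (expMixtures_pos hW x')) hx'
  rw [Real.log_mul (Real.exp_ne_zero _) (expMixtures_pos hW x').ne', Real.log_exp] at this
  linarith

lemma exists_mem_expMixtures_forall_neg_log_le [Nonempty β] (s : Finset ι) {V : ι → α → ℝ}
    (hV : ∀ i ∈ s, V i ∈ expMixtures c) :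
    ∃ W ∈ expMixtures c, ∀ i ∈ s, ∀ x,
      -Real.log (W x) ≤ -Real.log (V i x) + Real.log s.card := by
  rcases s.eq_empty_or_nonempty with rfl | hs
  · obtain ⟨W, hW⟩ := nonempty_expMixtures (c := c)
    exact ⟨W, hW, by simp⟩
  have hcard : (0 : ℝ) < s.card := mod_cast hs.card_pos
  refine ⟨∑ i ∈ s, (s.card : ℝ)⁻¹ • V i,
    convex_expMixtures.sum_mem (fun _ _ ↦ by positivity) (by simp [hcard.ne']) hV,
    fun i hi x ↦ ?_⟩
  have hpos : ∀ j ∈ s, 0 < (s.card : ℝ)⁻¹ * V j x := fun j hj ↦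
    mul_pos (inv_pos.2 hcard) (expMixtures_pos (hV j hj) x)
  have hle : (s.card : ℝ)⁻¹ * V i x ≤ (∑ i ∈ s, (s.card : ℝ)⁻¹ • V i) x := by
    simpa only [Finset.sum_apply, Pi.smul_apply, smul_eq_mul] using
      Finset.single_le_sum (fun j hj ↦ (hpos j hj).le) hi
  have := Real.log_le_log (hpos i hi) hle
  rw [Real.log_mul (by positivity) (expMixtures_pos (hV i hi) x).ne', Real.log_inv] at this
  linarith

end ExpMixtures

section WordMixtures

variable {X Y : Type*} {T : X → X} {c : X → Y → ℝ} {l : ℝ} {n m : ℕ} {U V W : X → ℝ}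

/-- The total cost of describing the orbit segment `x, T x, …, T^{n-1} x` by the word `a`. -/
def wordCost (T : X → X) (c : X → Y → ℝ) (n : ℕ) (x : X) (a : Fin n → Y) : ℝ :=
  ∑ k : Fin n, c (T^[k] x) (a k)

/-- The lossy descriptions, in the sense of `expMixtures`, of orbit segments of length `n` by
words. -/
abbrev wordMixtures (T : X → X) (c : X → Y → ℝ) (n : ℕ) : Set (X → ℝ) :=
  expMixtures (wordCost T c n)

lemma wordCost_nonneg (hc : ∀ x y, 0 ≤ c x y) (x : X) (a : Fin n → Y) : 0 ≤ wordCost T c n x a :=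
  Finset.sum_nonneg fun _ _ ↦ hc _ _

lemma wordCost_le (hc : ∀ x y, c x y ≤ l) (x : X) (a : Fin n → Y) : wordCost T c n x a ≤ n * l :=
  (Finset.sum_le_sum fun _ _ ↦ hc _ _).trans_eq (by simp)

lemma continuous_wordCost [TopologicalSpace X] [TopologicalSpace Y] (hT : Continuous T)
    (hc : Continuous ↿c) : Continuous ↿(wordCost T c n) :=
  continuous_finsetSum (Finset.univ : Finset (Fin n)) fun k _ ↦ hc.comp
    (((hT.iterate k).comp continuous_fst).prodMk ((continuous_apply k).comp continuous_snd))

lemma wordCost_append (x : X) (a : Fin n → Y) (b : Fin m → Y) :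
    wordCost T c (n + m) x (Fin.append a b) = wordCost T c n x a + wordCost T c m (T^[n] x) b := by
  simp only [wordCost, Fin.sum_univ_add, Fin.append_left, Fin.append_right, Fin.val_castAdd,
    Fin.val_natAdd, add_comm n, Function.iterate_add_apply]

lemma one_mem_wordMixtures_zero : (1 : X → ℝ) ∈ wordMixtures T c 0 := by
  convert exp_neg_mem_expMixtures (c := wordCost T c 0) Fin.elim0
  simp [wordCost]

lemma mul_comp_iterate_mem_wordMixtures (hU : U ∈ wordMixtures T c n)
    (hV : V ∈ wordMixtures T c m) : U * V ∘ T^[n] ∈ wordMixtures T c (n + m) := by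
  refine expMixtures_subset
    (convex_expMixtures.linear_preimage (LinearMap.mulRight ℝ (V ∘ T^[n]))) (fun a ↦ ?_) hU
  refine expMixtures_subset (convex_expMixtures.linear_preimage
    (LinearMap.mulLeft ℝ (fun x ↦ Real.exp (-wordCost T c n x a)) ∘ₗ
      LinearMap.funLeft ℝ ℝ T^[n])) (fun b ↦ ?_) hV
  have hab := exp_neg_mem_expMixtures (c := wordCost T c (n + m)) (Fin.append a b)
  simp only [wordCost_append, neg_add, Real.exp_add] at hab
  exact hab

lemma prod_iterate_mem_wordMixtures (hU : U ∈ wordMixtures T c n) (k : ℕ) :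
    (fun x ↦ ∏ i ∈ Finset.range k, U (T^[n] ^[i] x)) ∈ wordMixtures T c (k * n) := by
  induction k with
  | zero => simpa [Pi.one_def] using one_mem_wordMixtures_zero (T := T) (c := c)
  | succ k ih =>
    rw [Nat.succ_mul]
    convert mul_comp_iterate_mem_wordMixtures ih hU using 1
    ext x
    simp [Finset.prod_range_succ, ← Function.iterate_mul, mul_comm k n]

lemma exists_neg_log_eq_birkhoffSum (hU : U ∈ wordMixtures T c n) (k : ℕ) :
    ∃ V ∈ wordMixtures T c (k * n),
      ∀ x, -Real.log (V x) = birkhoffSum T^[n] (fun y ↦ -Real.log (U y)) k x := by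
  refine ⟨_, prod_iterate_mem_wordMixtures hU k, fun x ↦ ?_⟩
  rw [Real.log_prod fun i _ ↦ (expMixtures_pos hU _).ne', birkhoffSum, Finset.sum_neg_distrib]

/-- Both ends of a word may be filled arbitrarily, at a cost of at most `l` per letter. -/
lemma exists_neg_log_le_birkhoffSum_iterate [Nonempty Y] (hc : ∀ x y, c x y ≤ l)
    (hU : U ∈ wordMixtures T c n) (t k m : ℕ) :
    ∃ V ∈ wordMixtures T c (t + (k * n + m)), ∀ x, -Real.log (V x) ≤
      (t + m) * l + birkhoffSum T^[n] (fun y ↦ -Real.log (U y)) k (T^[t] x) := by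
  obtain ⟨A, hA⟩ := nonempty_expMixtures (c := wordCost T c t)
  obtain ⟨B, hB⟩ := nonempty_expMixtures (c := wordCost T c m)
  obtain ⟨P, hP, hPU⟩ := exists_neg_log_eq_birkhoffSum hU k
  refine ⟨_, mul_comp_iterate_mem_wordMixtures hA (mul_comp_iterate_mem_wordMixtures hP hB),
    fun x ↦ ?_⟩
  have hAx := neg_log_expMixtures_le (fun b ↦ wordCost_le hc x b) hA
  have hBx := neg_log_expMixtures_le (fun b ↦ wordCost_le hc (T^[k * n] (T^[t] x)) b) hB
  have hPx := hPU (T^[t] x)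
  simp only [Pi.mul_apply, Function.comp_apply]
  rw [Real.log_mul (expMixtures_pos hA _).ne'
      (mul_pos (expMixtures_pos hP _) (expMixtures_pos hB _)).ne',
    Real.log_mul (expMixtures_pos hP _).ne' (expMixtures_pos hB _).ne']
  linarith

lemma sum_birkhoffSum_iterate (T : X → X) (f : X → ℝ) (n k : ℕ) (x : X) :
    ∑ t ∈ Finset.range n, birkhoffSum T^[n] f k (T^[t] x) = birkhoffSum T f (k * n) x := by
  induction k with
  | zero => simp
  | succ k ih =>
    simp only [birkhoffSum_succ, Finset.sum_add_distrib, ih, Nat.succ_mul, birkhoffSum_add]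
    congr 1
    refine Finset.sum_congr rfl fun t _ ↦ ?_
    rw [← Function.iterate_mul, mul_comm k n, ← Function.iterate_add_apply,
      ← Function.iterate_add_apply, add_comm]

lemma birkhoffSum_mono_of_nonneg {f : X → ℝ} (hf : ∀ x, 0 ≤ f x) (hnm : n ≤ m) (x : X) :
    birkhoffSum T f n x ≤ birkhoffSum T f m x :=
  Finset.sum_le_sum_of_subset_of_nonneg (Finset.range_mono hnm) fun _ _ _ ↦ hf _

lemma exists_neg_log_le_of_phase [Nonempty Y] (hc : ∀ x y, c x y ∈ Icc 0 l)
    (hU : U ∈ wordMixtures T c n) {t N : ℕ} (htn : t < n) (hnN : n ≤ N) :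
    ∃ V ∈ wordMixtures T c N, ∀ x, -Real.log (V x) ≤
      2 * n * l + birkhoffSum T^[n] (fun y ↦ -Real.log (U y)) (N / n - 1) (T^[t] x) := by
  obtain ⟨k, hk⟩ : ∃ k, N / n = k + 1 :=
    Nat.exists_eq_add_one.2 (Nat.div_pos hnN (Nat.zero_lt_of_lt htn))
  have hN := Nat.div_add_mod N n
  have hmod := Nat.mod_lt N (Nat.zero_lt_of_lt htn)
  rw [hk, mul_add, mul_one, mul_comm n k] at hN
  obtain ⟨m, rfl⟩ : ∃ m, N = t + (k * n + m) := ⟨N - k * n - t, by omega⟩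
  have htm : (t + m : ℝ) ≤ 2 * n := mod_cast (show t + m ≤ 2 * n by omega)
  obtain ⟨V, hV, hVx⟩ := exists_neg_log_le_birkhoffSum_iterate (fun x y ↦ (hc x y).2) hU t k m
  refine ⟨V, hV, fun x ↦ (hVx x).trans ?_⟩
  have hl : 0 ≤ l := by
    have y := Classical.arbitrary Y
    exact (hc x y).1.trans (hc x y).2
  rw [hk, Nat.add_sub_cancel]
  gcongr

/-- Averaging over the `n` phases at which the orbit may be cut into blocks of length `n` turns
a mixture for words of length `n` into one for words of any length `N`. -/
lemma exists_mul_neg_log_le_birkhoffSum [Nonempty Y] (hc : ∀ x y, c x y ∈ Icc 0 l)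
    (hU : U ∈ wordMixtures T c n) {N : ℕ} (hnN : n ≤ N) :
    ∃ W ∈ wordMixtures T c N, ∀ x, n * -Real.log (W x) ≤
      n * (2 * n * l + Real.log n) + birkhoffSum T (fun y ↦ -Real.log (U y)) N x := by
  have hphase : ∀ t ∈ Finset.range n, ∃ V ∈ wordMixtures T c N, ∀ x, -Real.log (V x) ≤
      2 * n * l + birkhoffSum T^[n] (fun y ↦ -Real.log (U y)) (N / n - 1) (T^[t] x) :=
    fun t ht ↦ exists_neg_log_le_of_phase hc hU (Finset.mem_range.1 ht) hnN
  choose! V hV hVx using hphase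
  obtain ⟨W, hW, hWV⟩ := exists_mem_expMixtures_forall_neg_log_le _ hV
  refine ⟨W, hW, fun x ↦ ?_⟩
  have hblocks : (N / n - 1) * n ≤ N :=
    (Nat.mul_le_mul_right n (Nat.sub_le _ _)).trans (Nat.div_mul_le_self N n)
  calc n * -Real.log (W x) = ∑ _t ∈ Finset.range n, -Real.log (W x) := by simp
    _ ≤ ∑ t ∈ Finset.range n, (2 * n * l + Real.log n
          + birkhoffSum T^[n] (fun y ↦ -Real.log (U y)) (N / n - 1) (T^[t] x)) := by
        refine Finset.sum_le_sum fun t ht ↦ ?_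
        have := hWV t ht x
        rw [Finset.card_range] at this
        linarith [hVx t ht x]
    _ = n * (2 * n * l + Real.log n)
          + birkhoffSum T (fun y ↦ -Real.log (U y)) ((N / n - 1) * n) x := by
        rw [Finset.sum_add_distrib, sum_birkhoffSum_iterate]
        simp [mul_add]
    _ ≤ _ := by
        gcongr
        exact birkhoffSum_mono_of_nonneg (fun y ↦ neg_log_expMixtures_nonneg
          (wordCost_nonneg (fun x y ↦ (hc x y).1) y) hU) hblocks x

end WordMixtures

section InvariantMeasures

variable {X : Type*} [MeasurableSpace X] {T : X → X} {f : X → ℝ}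

/-- The `T`-invariant probability measures, as a subset of the space of finite measures, which
unlike the space of probability measures has the algebraic structure needed to speak of convexity
and of extreme points. -/
def invariantMeasures (T : X → X) : Set (FiniteMeasure X) :=
  {μ | MeasurePreserving T (μ : Measure X) μ ∧ IsProbabilityMeasure (μ : Measure X)}

lemma convex_invariantMeasures : Convex ℝ≥0 (invariantMeasures T) := by
  rintro μ ⟨hμ, hμp⟩ ν ⟨hν, hνp⟩ a b - - hab
  refine ⟨?_, ?_⟩
  · simpa only [FiniteMeasure.toMeasure_add, FiniteMeasure.toMeasure_smul] using
      (hμ.smul_measure a).add_measure (hν.smul_measure b)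
  · constructor
    simpa [FiniteMeasure.toMeasure_add, FiniteMeasure.toMeasure_smul] using mod_cast hab

lemma ergodic_of_mem_extremePoints {μ : FiniteMeasure X}
    (hμ : μ ∈ extremePoints ℝ≥0 (invariantMeasures T)) : Ergodic T (μ : Measure X) := by
  refine Ergodic.of_mem_extremePoints ⟨hμ.1, ?_⟩
  rintro ν₁ ⟨hν₁, hν₁p⟩ ν₂ ⟨hν₂, hν₂p⟩ ⟨a, b, ha, hb, hab, hμab⟩
  have hatop : a ≠ ∞ := ne_top_of_le_ne_top ENNReal.one_ne_top (hab ▸ le_self_add)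
  have hbtop : b ≠ ∞ := ne_top_of_le_ne_top ENNReal.one_ne_top (hab ▸ le_add_self)
  lift a to ℝ≥0 using hatop
  lift b to ℝ≥0 using hbtop
  let ν₁' : FiniteMeasure X := ⟨ν₁, inferInstance⟩
  let ν₂' : FiniteMeasure X := ⟨ν₂, inferInstance⟩
  have hseg : μ ∈ openSegment ℝ≥0 ν₁' ν₂' :=
    ⟨a, b, mod_cast ha, mod_cast hb, mod_cast hab, Subtype.ext hμab⟩
  exact congrArg Subtype.val
    (hμ.2 (show ν₁' ∈ _ from ⟨hν₁, hν₁p⟩) (show ν₂' ∈ _ from ⟨hν₂, hν₂p⟩) hseg)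

variable [TopologicalSpace X] [CompactSpace X] [BorelSpace X]

lemma integrable_of_continuous (hf : Continuous f) (μ : Measure X) [IsFiniteMeasure μ] :
    Integrable f μ :=
  hf.integrable_of_hasCompactSupport (HasCompactSupport.of_compactSpace f)

lemma continuous_integral_finiteMeasure (hf : Continuous f) :
    Continuous fun μ : FiniteMeasure X ↦ ∫ x, f x ∂(μ : Measure X) :=
  FiniteMeasure.continuous_integral_continuousMap (⟨f, hf⟩ : C(X, ℝ))

lemma integral_smul_add_smul_finiteMeasure (hf : Continuous f) (μ ν : FiniteMeasure X)
    (a b : ℝ≥0) :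
    ∫ x, f x ∂((a • μ + b • ν : FiniteMeasure X) : Measure X)
      = a • ∫ x, f x ∂(μ : Measure X) + b • ∫ x, f x ∂(ν : Measure X) := by
  rw [FiniteMeasure.toMeasure_add, FiniteMeasure.toMeasure_smul, FiniteMeasure.toMeasure_smul,
    integral_add_measure (integrable_of_continuous hf _) (integrable_of_continuous hf _),
    integral_smul_nnreal_measure, integral_smul_nnreal_measure]

variable [HasOuterApproxClosed X]

lemma isCompact_invariantMeasures [T2Space X] (hT : Continuous T) :
    IsCompact (invariantMeasures T) := by
  have heq : invariantMeasures T
      = {μ : FiniteMeasure X | μ.mass = 1} ∩ {μ : FiniteMeasure X | μ.map T = μ} := by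
    ext μ
    have hmass : IsProbabilityMeasure (μ : Measure X) ↔ μ.mass = 1 := by
      rw [isProbabilityMeasure_iff, ← FiniteMeasure.ennreal_mass]
      norm_cast
    have hmap : MeasurePreserving T (μ : Measure X) μ ↔ μ.map T = μ :=
      ⟨fun h ↦ Subtype.ext h.map_eq, fun h ↦ ⟨hT.measurable, congrArg Subtype.val h⟩⟩
    exact (and_congr hmap hmass).trans and_comm
  rw [heq]
  exact (isCompact_setOfPred_finiteMeasure_eq_of_compactSpace X 1).inter_right
    (isClosed_eq (FiniteMeasure.continuous_map hT) continuous_id)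

lemma exists_continuous_convexOn_ne {μ ν : FiniteMeasure X} (hμν : μ ≠ ν) :
    ∃ Φ : FiniteMeasure X → ℝ, Continuous Φ ∧ ConvexOn ℝ≥0 univ Φ ∧ Φ μ ≠ Φ ν := by
  obtain ⟨f, hf⟩ : ∃ f : BoundedContinuousFunction X ℝ,
      ∫ x, f x ∂(μ : Measure X) ≠ ∫ x, f x ∂(ν : Measure X) := by
    by_contra! h
    exact hμν (FiniteMeasure.ext_of_forall_integral_eq h)
  exact ⟨fun μ ↦ ∫ x, f x ∂(μ : Measure X), continuous_integral_finiteMeasure f.continuous,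
    ⟨convex_univ, fun μ _ ν _ a b _ _ _ ↦
      (integral_smul_add_smul_finiteMeasure f.continuous μ ν a b).le⟩, hf⟩

theorem exists_ergodic_isMaxOn [T2Space X] (hT : Continuous T)
    (hne : (invariantMeasures T).Nonempty) {Ψ : FiniteMeasure X → ℝ}
    (hΨc : UpperSemicontinuousOn Ψ (invariantMeasures T))
    (hΨ : ConvexOn ℝ≥0 (invariantMeasures T) Ψ) :
    ∃ μ ∈ invariantMeasures T, Ergodic T (μ : Measure X) ∧ IsMaxOn Ψ (invariantMeasures T) μ := by
  obtain ⟨μ, hμ, hmax⟩ := exists_mem_extremePoints_isMaxOn (isCompact_invariantMeasures hT) hne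
    hΨc hΨ fun μ _ ν _ hμν ↦
      let ⟨Φ, hΦc, hΦ, hne⟩ := exists_continuous_convexOn_ne hμν
      ⟨Φ, hΦc.upperSemicontinuous.upperSemicontinuousOn _,
        hΦ.subset (subset_univ _) convex_invariantMeasures, hne⟩
  exact ⟨μ, hμ.1, ergodic_of_mem_extremePoints hμ, hmax⟩

end InvariantMeasures

section CodeRate

variable {X Y : Type*} {T : X → X} {c : X → Y → ℝ}

/-- A lossy block code for orbits: a mixture `weight` for words of some positive length, which
describes the orbit segment of that length starting at `x` in `-log (weight x)` nats. -/
structure BlockCode (T : X → X) (c : X → Y → ℝ) where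
  length : ℕ
  length_pos : 0 < length
  weight : X → ℝ
  weight_mem : weight ∈ wordMixtures T c length

instance [Nonempty Y] : Nonempty (BlockCode T c) :=
  let ⟨W, hW⟩ := nonempty_expMixtures (c := wordCost T c 1)
  ⟨⟨1, one_pos, W, hW⟩⟩

lemma BlockCode.continuous_neg_log_weight [TopologicalSpace X] [TopologicalSpace Y]
    (hT : Continuous T) (hc : Continuous ↿c) (p : BlockCode T c) :
    Continuous fun x ↦ -Real.log (p.weight x) :=
  continuous_neg_log_expMixtures
    (fun a ↦ (continuous_wordCost hT hc).comp (Continuous.prodMk_left a)) p.weight_mem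

lemma exists_blockCode_forall_neg_log_le [Nonempty Y] (s : Finset (BlockCode T c)) {K : ℕ}
    (hK : 0 < K) : ∃ q : BlockCode T c, K ≤ q.length ∧ ∀ p ∈ s, ∃ k : ℕ, k * p.length = q.length ∧
      ∀ x, -Real.log (q.weight x) ≤
        birkhoffSum T^[p.length] (fun y ↦ -Real.log (p.weight y)) k x + Real.log s.card := by
  have hpos : 0 < ∏ p ∈ s, p.length := Finset.prod_pos fun p _ ↦ p.length_pos
  have hpow : ∀ p ∈ s, ∃ V ∈ wordMixtures T c (K * ∏ p ∈ s, p.length), ∃ k : ℕ,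
      k * p.length = K * ∏ p ∈ s, p.length ∧
      ∀ x, -Real.log (V x) = birkhoffSum T^[p.length] (fun y ↦ -Real.log (p.weight y)) k x := by
    intro p hp
    obtain ⟨k, hk⟩ := (Finset.dvd_prod_of_mem BlockCode.length hp).mul_left K
    rw [mul_comm p.length] at hk
    obtain ⟨V, hV, hVx⟩ := exists_neg_log_eq_birkhoffSum p.weight_mem k
    exact ⟨V, hk ▸ hV, k, hk.symm, hVx⟩
  choose! V hV k hk hVx using hpow
  obtain ⟨W, hW, hWV⟩ := exists_mem_expMixtures_forall_neg_log_le s hV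
  exact ⟨⟨_, Nat.mul_pos hK hpos, W, hW⟩, Nat.le_mul_of_pos_right K hpos,
    fun p hp ↦ ⟨k p, hk p hp, fun x ↦ hVx p hp x ▸ hWV p hp x⟩⟩

variable [MeasurableSpace X]

/-- The mean description length per letter, in nats. -/
def BlockCode.rate (p : BlockCode T c) (μ : Measure X) : ℝ :=
  (∫ x, -Real.log (p.weight x) ∂μ) / p.length

/-- The best description length per letter: a lower bound for the rate distortion function that,
unlike the latter, is visibly an infimum of affine functions of the measure. -/
def codeRate (T : X → X) (c : X → Y → ℝ) (μ : Measure X) : ℝ :=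
  ⨅ p : BlockCode T c, p.rate μ

lemma BlockCode.rate_nonneg (hc : ∀ x y, 0 ≤ c x y) (p : BlockCode T c) (μ : Measure X) :
    0 ≤ p.rate μ :=
  div_nonneg (integral_nonneg fun x ↦
    neg_log_expMixtures_nonneg (wordCost_nonneg hc x) p.weight_mem) (Nat.cast_nonneg _)

lemma bddBelow_range_rate (hc : ∀ x y, 0 ≤ c x y) (μ : Measure X) :
    BddBelow (range fun p : BlockCode T c ↦ p.rate μ) :=
  ⟨0, forall_mem_range.2 fun p ↦ p.rate_nonneg hc μ⟩

lemma codeRate_le_rate (hc : ∀ x y, 0 ≤ c x y) (p : BlockCode T c) (μ : Measure X) :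
    codeRate T c μ ≤ p.rate μ :=
  ciInf_le (bddBelow_range_rate hc μ) p

lemma integral_birkhoffSum {μ : Measure X} (hT : MeasurePreserving T μ μ) {f : X → ℝ}
    (hf : Integrable f μ) (n : ℕ) : ∫ x, birkhoffSum T f n x ∂μ = n * ∫ x, f x ∂μ := by
  have hint : ∀ k ∈ Finset.range n, Integrable (fun x ↦ f (T^[k] x)) μ := fun k _ ↦
    (hT.iterate k).integrable_comp_of_integrable hf
  have hk : ∀ k, ∫ x, f (T^[k] x) ∂μ = ∫ x, f x ∂μ := fun k ↦ by
    rw [← integral_map (hT.iterate k).aemeasurable, (hT.iterate k).map_eq]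
    simpa only [(hT.iterate k).map_eq] using hf.aestronglyMeasurable
  simp only [birkhoffSum, integral_finsetSum _ hint, hk, Finset.sum_const, Finset.card_range,
    nsmul_eq_mul]

variable [TopologicalSpace X] [CompactSpace X] [BorelSpace X] [TopologicalSpace Y]

lemma BlockCode.continuous_rate (hT : Continuous T) (hc : Continuous ↿c) (p : BlockCode T c) :
    Continuous fun μ : FiniteMeasure X ↦ p.rate μ :=
  (continuous_integral_finiteMeasure (p.continuous_neg_log_weight hT hc)).div_const _

lemma BlockCode.rate_smul_add_smul (hT : Continuous T) (hc : Continuous ↿c) (p : BlockCode T c)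
    (μ ν : FiniteMeasure X) (a b : ℝ≥0) :
    p.rate (a • μ + b • ν : FiniteMeasure X) = a • p.rate μ + b • p.rate ν := by
  simp only [rate, integral_smul_add_smul_finiteMeasure (p.continuous_neg_log_weight hT hc),
    add_div, smul_div_assoc]

lemma upperSemicontinuous_codeRate (hT : Continuous T) (hc : Continuous ↿c)
    (hc0 : ∀ x y, 0 ≤ c x y) : UpperSemicontinuous fun μ : FiniteMeasure X ↦ codeRate T c μ :=
  upperSemicontinuous_ciInf (fun μ ↦ bddBelow_range_rate hc0 μ)
    fun p ↦ (p.continuous_rate hT hc).upperSemicontinuous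

lemma BlockCode.rate_le_add_of_neg_log_le (hT : Continuous T) (hc : Continuous ↿c)
    {p q : BlockCode T c} {k : ℕ} (hk : k * p.length = q.length) {L : ℝ}
    (hpq : ∀ x, -Real.log (q.weight x) ≤
      birkhoffSum T^[p.length] (fun y ↦ -Real.log (p.weight y)) k x + L)
    {μ : FiniteMeasure X} (hμ : μ ∈ invariantMeasures T) :
    q.rate μ ≤ p.rate μ + L / q.length := by
  obtain ⟨hTμ, _⟩ := hμ
  have hint := integrable_of_continuous (p.continuous_neg_log_weight hT hc) (μ : Measure X)
  have hsum : Integrable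
      (birkhoffSum T^[p.length] (fun y ↦ -Real.log (p.weight y)) k) (μ : Measure X) :=
    integrable_finsetSum _ fun i _ ↦
      ((hTμ.iterate _).iterate i).integrable_comp_of_integrable hint
  have hmean : ∫ x, -Real.log (q.weight x) ∂(μ : Measure X)
      ≤ k * (∫ x, -Real.log (p.weight x) ∂(μ : Measure X)) + L := by
    calc _ ≤ ∫ x, (birkhoffSum T^[p.length] (fun y ↦ -Real.log (p.weight y)) k x + L)
            ∂(μ : Measure X) :=
          integral_mono (integrable_of_continuous (q.continuous_neg_log_weight hT hc) _)
            (hsum.add (integrable_const _)) hpq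
      _ = _ := by
          rw [integral_add hsum (integrable_const _), integral_birkhoffSum (hTμ.iterate _) hint]
          simp
  have hkp : (k * p.length : ℝ) = q.length := mod_cast hk
  have hq0 : (q.length : ℝ) ≠ 0 := mod_cast q.length_pos.ne'
  have hk0 : (k : ℝ) ≠ 0 := left_ne_zero_of_mul (hkp ▸ hq0)
  calc q.rate μ ≤ (k * (∫ x, -Real.log (p.weight x) ∂(μ : Measure X)) + L) / q.length :=
        div_le_div_of_nonneg_right hmean (Nat.cast_nonneg _)
    _ = p.rate μ + L / q.length := by
        rw [add_div, BlockCode.rate, ← hkp, mul_div_mul_left _ _ hk0]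

/-- Averaging finitely many codes costs only a bounded number of nats, which becomes negligible
once they have been iterated to a long common length. -/
lemma exists_blockCode_forall_rate_le_add [Nonempty Y] (hT : Continuous T) (hc : Continuous ↿c)
    (s : Finset (BlockCode T c)) {δ : ℝ} (hδ : 0 < δ) :
    ∃ q : BlockCode T c, ∀ p ∈ s, ∀ μ ∈ invariantMeasures T, q.rate μ ≤ p.rate μ + δ := by
  obtain ⟨K, hK⟩ := exists_nat_gt (Real.log s.card / δ)
  have hK0 : 0 < K := by
    exact_mod_cast (div_nonneg (Real.log_natCast_nonneg _) hδ.le).trans_lt hK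
  obtain ⟨q, hKq, hq⟩ := exists_blockCode_forall_neg_log_le s hK0
  have hlog : Real.log s.card / q.length ≤ δ := by
    rw [div_le_comm₀ (mod_cast q.length_pos) hδ]
    exact hK.le.trans (mod_cast hKq)
  refine ⟨q, fun p hp μ hμ ↦ ?_⟩
  obtain ⟨k, hk, hqp⟩ := hq p hp
  exact (BlockCode.rate_le_add_of_neg_log_le hT hc hk hqp hμ).trans (by gcongr)

lemma convexOn_codeRate [Nonempty Y] (hT : Continuous T) (hc : Continuous ↿c)
    (hc0 : ∀ x y, 0 ≤ c x y) :
    ConvexOn ℝ≥0 (invariantMeasures T) fun μ ↦ codeRate T c μ := by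
  classical
  refine ⟨convex_invariantMeasures, fun μ hμ ν hν a b _ _ hab ↦
    le_of_forall_pos_le_add fun δ hδ ↦ ?_⟩
  obtain ⟨p, hp⟩ := exists_lt_of_ciInf_lt (lt_add_of_pos_right (codeRate T c μ) (half_pos hδ))
  obtain ⟨q, hq⟩ := exists_lt_of_ciInf_lt (lt_add_of_pos_right (codeRate T c ν) (half_pos hδ))
  obtain ⟨r, hr⟩ := exists_blockCode_forall_rate_le_add hT hc {p, q} (half_pos hδ)
  have hμr : r.rate μ ≤ codeRate T c μ + δ := by linarith [hr p (by simp) μ hμ]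
  have hνr : r.rate ν ≤ codeRate T c ν + δ := by linarith [hr q (by simp) ν hν]
  calc codeRate T c (a • μ + b • ν : FiniteMeasure X)
      ≤ a • r.rate μ + b • r.rate ν :=
        (codeRate_le_rate hc0 r _).trans_eq (r.rate_smul_add_smul hT hc μ ν a b)
    _ ≤ a • (codeRate T c μ + δ) + b • (codeRate T c ν + δ) := by gcongr
    _ = a • codeRate T c μ + b • codeRate T c ν + δ := by
        have hab' : (a + b : ℝ) = 1 := mod_cast hab
        simp only [NNReal.smul_def, smul_eq_mul]
        linear_combination δ * hab'

lemma exists_blockCode_forall_rate_le [T2Space X] [HasOuterApproxClosed X] [Nonempty Y]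
    (hT : Continuous T) (hc : Continuous ↿c) {b δ : ℝ}
    (hb : ∀ μ ∈ invariantMeasures T, codeRate T c μ ≤ b) (hδ : 0 < δ) :
    ∃ q : BlockCode T c, ∀ μ ∈ invariantMeasures T, q.rate μ ≤ b + δ := by
  obtain ⟨s, hs⟩ := (isCompact_invariantMeasures hT).elim_finite_subcover
    (fun p : BlockCode T c ↦ {μ : FiniteMeasure X | p.rate μ < b + δ / 2})
    (fun p ↦ isOpen_lt (p.continuous_rate hT hc) continuous_const) fun μ hμ ↦
      mem_iUnion.2 (exists_lt_of_ciInf_lt ((hb μ hμ).trans_lt (by linarith)))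
  obtain ⟨q, hq⟩ := exists_blockCode_forall_rate_le_add hT hc s (half_pos hδ)
  refine ⟨q, fun μ hμ ↦ ?_⟩
  obtain ⟨p, hps, hp⟩ := mem_iUnion₂.1 (hs hμ)
  rw [mem_ofPred_eq] at hp
  linarith [hq p hps μ hμ]

theorem codeRate_le_of_forall_ergodic [T2Space X] [HasOuterApproxClosed X] [Nonempty Y]
    (hT : Continuous T) (hc : Continuous ↿c) (hc0 : ∀ x y, 0 ≤ c x y) {b : ℝ}
    (hb : ∀ μ : Measure X, IsProbabilityMeasure μ → Ergodic T μ → codeRate T c μ ≤ b)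
    {μ : FiniteMeasure X} (hμ : μ ∈ invariantMeasures T) : codeRate T c μ ≤ b := by
  obtain ⟨ν, ⟨-, hν⟩, hνerg, hmax⟩ := exists_ergodic_isMaxOn hT ⟨μ, hμ⟩
    ((upperSemicontinuous_codeRate hT hc hc0).upperSemicontinuousOn _)
    (convexOn_codeRate hT hc hc0)
  exact (hmax hμ).trans (hb ν hν hνerg)

end CodeRate

section FiniteInformation

variable {ι κ : Type*} {s : Finset ι} {t : Finset κ} {P : ι → κ → ℝ} {u : ι → ℝ} {v : κ → ℝ}

lemma sub_le_mul_log_div {p q : ℝ} (hp : 0 ≤ p) (hq : 0 ≤ q) (h : q = 0 → p = 0) :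
    p - q ≤ p * Real.log (p / q) := by
  rcases hp.eq_or_lt with rfl | hp
  · simpa using hq
  have hq : 0 < q := hq.lt_of_ne fun h0 ↦ hp.ne' (h h0.symm)
  calc p - q = p * (1 - (p / q)⁻¹) := by field_simp
    _ ≤ p * Real.log (p / q) :=
      mul_le_mul_of_nonneg_left (Real.one_sub_inv_le_log_of_pos (div_pos hp hq)) hp.le

lemma mul_neg_log_sub_le {p x y z C : ℝ} (hp : 0 ≤ p) (hpx : p ≤ x) (hpy : p ≤ y)
    (hz : y * Real.exp (-C) ≤ z) :
    p * (-Real.log z - C)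
      ≤ p * Real.log (p / (x * y)) + (x / z * (y * Real.exp (-C)) - p) := by
  rcases hp.eq_or_lt with rfl | hp
  · have hz0 : 0 ≤ z := (mul_nonneg hpy (Real.exp_pos _).le).trans hz
    simp only [zero_mul, zero_add, sub_zero]
    positivity
  have hx : 0 < x := hp.trans_le hpx
  have hy : 0 < y := hp.trans_le hpy
  have hz0 : 0 < z := (mul_pos hy (Real.exp_pos _)).trans_le hz
  have hq : 0 < x / z * (y * Real.exp (-C)) := by positivity
  have := sub_le_mul_log_div hp.le hq.le fun h ↦ absurd h hq.ne'
  rw [show p / (x / z * (y * Real.exp (-C))) = p / (x * y) * (z * Real.exp C) by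
      rw [Real.exp_neg]; field_simp,
    Real.log_mul (by positivity) (by positivity), Real.log_mul hz0.ne' (Real.exp_ne_zero _),
    Real.log_exp] at this
  linarith

/-- The finite Donsker–Varadhan inequality: Gibbs' inequality for the joint law against the law
with density `exp (-C i j) / ∑ j, v j * exp (-C i j)` with respect to the product law. -/
lemma sum_mul_neg_log_sub_le (hP : ∀ i ∈ s, ∀ j ∈ t, 0 ≤ P i j)
    (hPv : ∀ i ∈ s, ∀ j ∈ t, P i j ≤ v j) (hu : ∀ i ∈ s, ∑ j ∈ t, P i j = u i) (C : ι → κ → ℝ) :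
    ∑ i ∈ s, ∑ j ∈ t, P i j * (-Real.log (∑ j ∈ t, v j * Real.exp (-C i j)) - C i j)
      ≤ ∑ i ∈ s, ∑ j ∈ t, P i j * Real.log (P i j / (u i * v j)) := by
  refine Finset.sum_le_sum fun i hi ↦ ?_
  set Z := ∑ j ∈ t, v j * Real.exp (-C i j)
  have hterm : ∀ j ∈ t, 0 ≤ v j * Real.exp (-C i j) := fun j hj ↦
    mul_nonneg ((hP i hi j hj).trans (hPv i hi j hj)) (Real.exp_pos _).le
  have hu0 : 0 ≤ u i := hu i hi ▸ Finset.sum_nonneg (hP i hi)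
  have hsum : u i / Z * Z ≤ u i := by
    rw [div_mul_eq_mul_div]
    exact div_le_of_le_mul₀ (Finset.sum_nonneg hterm) hu0 le_rfl
  calc _ ≤ ∑ j ∈ t, (P i j * Real.log (P i j / (u i * v j))
          + (u i / Z * (v j * Real.exp (-C i j)) - P i j)) :=
        Finset.sum_le_sum fun j hj ↦ mul_neg_log_sub_le (hP i hi j hj)
          (hu i hi ▸ Finset.single_le_sum (hP i hi) hj) (hPv i hi j hj)
          (Finset.single_le_sum hterm hj)
    _ = ∑ j ∈ t, P i j * Real.log (P i j / (u i * v j)) + (u i / Z * Z - u i) := by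
        rw [Finset.sum_add_distrib, Finset.sum_sub_distrib, ← Finset.mul_sum, hu i hi]
    _ ≤ _ := by linarith

lemma sum_mul_log_div_le_sum_negMulLog (hP : ∀ i ∈ s, ∀ j ∈ t, 0 ≤ P i j)
    (hPu : ∀ i ∈ s, ∀ j ∈ t, P i j ≤ u i) (hv : ∀ j ∈ t, ∑ i ∈ s, P i j = v j) :
    ∑ i ∈ s, ∑ j ∈ t, P i j * Real.log (P i j / (u i * v j)) ≤ ∑ j ∈ t, (v j).negMulLog := by
  rw [Finset.sum_comm]
  refine Finset.sum_le_sum fun j hj ↦ ?_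
  have hpoint : ∀ i ∈ s, P i j * Real.log (P i j / (u i * v j)) ≤ P i j * -Real.log (v j) := by
    intro i hi
    rcases (hP i hi j hj).eq_or_lt with h0 | h0
    · simp [← h0]
    have hui : 0 < u i := h0.trans_le (hPu i hi j hj)
    have hvj : 0 < v j := h0.trans_le (hv j hj ▸ Finset.single_le_sum (hP · · j hj) hi)
    rw [← Real.log_inv]
    refine mul_le_mul_of_nonneg_left (Real.log_le_log (by positivity) ?_) h0.le
    rw [← div_div, ← one_div]
    exact div_le_div_of_nonneg_right (div_le_one_of_le₀ (hPu i hi j hj) hui.le) hvj.le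
  calc _ ≤ _ := Finset.sum_le_sum hpoint
    _ = (v j).negMulLog := by rw [← Finset.sum_mul, hv j hj, Real.negMulLog]; ring

lemma sum_negMulLog_le_log_card (hv : ∀ j ∈ t, 0 ≤ v j) (hv1 : ∑ j ∈ t, v j = 1) :
    ∑ j ∈ t, (v j).negMulLog ≤ Real.log t.card := by
  have ht : (0 : ℝ) < t.card := by
    rw [Nat.cast_pos, Finset.card_pos]
    exact Finset.nonempty_of_sum_ne_zero (hv1.trans_ne one_ne_zero)
  have := Real.concaveOn_negMulLog.le_map_sum (t := t) (w := fun _ ↦ (t.card : ℝ)⁻¹) (p := v)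
    (fun _ _ ↦ by positivity) (by simp [ht.ne']) hv
  simp only [smul_eq_mul, ← Finset.mul_sum, hv1, mul_one, Real.negMulLog, Real.log_inv] at this ⊢
  rwa [neg_mul_neg, mul_le_mul_iff_right₀ (inv_pos.2 ht)] at this

end FiniteInformation

section MutualInfo

variable {Ω A B ι κ : Type*}

lemma sum_image_fiber [Fintype ι] [DecidableEq (Set A)] (f : A → ι) {F : Set A → ℝ} (hF : F ∅ = 0) :
    ∑ s ∈ Finset.univ.image (fun i ↦ f ⁻¹' {i}), F s = ∑ i, F (f ⁻¹' {i}) := by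
  refine Finset.sum_image_of_pairwise_eq_zero fun i _ j _ hij heq ↦ ?_
  have := (disjoint_singleton.2 hij).preimage f
  rw [← heq, disjoint_self] at this
  rw [this, bot_eq_empty, hF]

variable [MeasurableSpace Ω] [MeasurableSpace A] [MeasurableSpace B]
  {P : Measure Ω} {ξ : Ω → A} {η : Ω → B}

lemma sum_measureReal_preimage_inter [IsFiniteMeasure P] (hξ : Measurable ξ) {p : Finset (Set A)}
    (hp : IsFinPartition p) {E : Set Ω} (hE : MeasurableSet E) :
    ∑ s ∈ p, P.real (ξ ⁻¹' s ∩ E) = P.real E := by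
  obtain ⟨hmeas, hdisj, hcover⟩ := hp
  have hU : ⋃ s ∈ p, ξ ⁻¹' s ∩ E = E := by
    simp_rw [← iUnion_inter, ← preimage_iUnion₂, ← Finset.mem_coe, ← sUnion_eq_biUnion, hcover,
      preimage_univ, univ_inter]
  rw [← measureReal_biUnion_finset (fun s hs t ht hst ↦ ((hdisj s hs t ht hst).preimage ξ).mono
    inter_subset_left inter_subset_left) fun s hs ↦ (hξ (hmeas s hs)).inter hE, hU]

lemma card_filter_measureReal_ne_zero_le {q : Finset (Set B)} (hq : IsFinPartition q)
    {S : Finset B} (hS : ∀ᵐ ω ∂P, η ω ∈ S) :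
    (q.filter fun t ↦ P.real (η ⁻¹' t) ≠ 0).card ≤ S.card := by
  refine Finset.card_le_card_of_forall_subsingleton (fun t y ↦ y ∈ t) (fun t ht ↦ ?_)
    fun y _ t ⟨ht, hyt⟩ t' ⟨ht', hyt'⟩ ↦ ?_
  · by_contra! hSt
    have hnull : ∀ᵐ ω ∂P, ω ∉ η ⁻¹' t := hS.mono fun ω hω ↦ hSt _ hω
    refine (Finset.mem_filter.1 ht).2 ?_
    rw [Measure.real, measure_eq_zero_iff_ae_notMem.2 hnull, ENNReal.toReal_zero]
  · by_contra hne
    exact Set.disjoint_left.1 (hq.2.1 t (Finset.mem_filter.1 ht).1 t' (Finset.mem_filter.1 ht').1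
      hne) hyt hyt'

theorem mutualInfo_le_log_card [IsProbabilityMeasure P] (hξ : Measurable ξ) (hη : Measurable η)
    {S : Finset B} (hS : ∀ᵐ ω ∂P, η ω ∈ S) :
    mutualInfo P ξ η ≤ ENNReal.ofReal (Real.log S.card) := by
  classical
  refine iSup₂_le fun p hp ↦ iSup₂_le fun q hq ↦ ENNReal.ofReal_le_ofReal ?_
  have hcol : ∀ t ∈ q, ∑ s ∈ p, P.real (ξ ⁻¹' s ∩ η ⁻¹' t) = P.real (η ⁻¹' t) := fun t ht ↦
    sum_measureReal_preimage_inter hξ hp (hη (hq.1 t ht))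
  have htotal : ∑ t ∈ q with P.real (η ⁻¹' t) ≠ 0, P.real (η ⁻¹' t) = 1 := by
    have := sum_measureReal_preimage_inter (P := P) hη hq MeasurableSet.univ
    simpa only [inter_univ, probReal_univ, Finset.sum_filter_ne_zero] using this
  calc _ ≤ ∑ t ∈ q, (P.real (η ⁻¹' t)).negMulLog :=
        sum_mul_log_div_le_sum_negMulLog (P := fun s t ↦ P.real (ξ ⁻¹' s ∩ η ⁻¹' t))
          (u := fun s ↦ P.real (ξ ⁻¹' s)) (fun _ _ _ _ ↦ measureReal_nonneg)
          (fun _ _ _ _ ↦ measureReal_mono inter_subset_left) hcol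
    _ = ∑ t ∈ q with P.real (η ⁻¹' t) ≠ 0, (P.real (η ⁻¹' t)).negMulLog := by
        refine (Finset.sum_filter_of_ne fun t _ ↦ ?_).symm
        contrapose!
        intro h
        rw [h, Real.negMulLog_zero]
    _ ≤ Real.log (q.filter fun t ↦ P.real (η ⁻¹' t) ≠ 0).card :=
        sum_negMulLog_le_log_card (fun _ _ ↦ measureReal_nonneg) htotal
    _ ≤ Real.log S.card := by
        refine Real.log_le_log (mod_cast Finset.card_pos.2 ?_)
          (mod_cast card_filter_measureReal_ne_zero_le hq hS)
        exact Finset.nonempty_of_sum_ne_zero (htotal.trans_ne one_ne_zero)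

variable [MeasurableSpace ι] [MeasurableSingletonClass ι] [MeasurableSpace κ]
  [MeasurableSingletonClass κ] {f : A → ι} {g : B → κ}

lemma isFinPartition_image_fiber [Fintype ι] [DecidableEq (Set A)] (hf : Measurable f) :
    IsFinPartition (Finset.univ.image fun i ↦ f ⁻¹' {i}) := by
  simp only [IsFinPartition, Finset.forall_mem_image, Finset.coe_image, Finset.coe_univ,
    image_univ, sUnion_range]
  refine ⟨fun i _ ↦ hf (measurableSet_singleton i), fun i _ j _ hij ↦ ?_,
    eq_univ_iff_forall.2 fun x ↦ mem_iUnion.2 ⟨f x, rfl⟩⟩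
  exact (disjoint_singleton.2 fun h ↦ hij (by rw [h])).preimage f

lemma sum_fiber_le_mutualInfo [Fintype ι] [Fintype κ] (hf : Measurable f) (hg : Measurable g) :
    ENNReal.ofReal (∑ i, ∑ j, P.real (ξ ⁻¹' (f ⁻¹' {i}) ∩ η ⁻¹' (g ⁻¹' {j})) *
      Real.log (P.real (ξ ⁻¹' (f ⁻¹' {i}) ∩ η ⁻¹' (g ⁻¹' {j})) /
        (P.real (ξ ⁻¹' (f ⁻¹' {i})) * P.real (η ⁻¹' (g ⁻¹' {j}))))) ≤ mutualInfo P ξ η := by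
  classical
  refine le_iSup₂_of_le _ (isFinPartition_image_fiber hf) (le_iSup₂_of_le _
    (isFinPartition_image_fiber hg) (ENNReal.ofReal_le_ofReal (Eq.le ?_)))
  rw [sum_image_fiber f]
  · refine Finset.sum_congr rfl fun i _ ↦ ?_
    rw [sum_image_fiber g]
    · rfl
    · simp
  · simp

lemma integral_eq_sum_fiber [Fintype ι] [Fintype κ] [IsFiniteMeasure P]
    (hξ : Measurable ξ) (hη : Measurable η) (hf : Measurable f) (hg : Measurable g)
    (F : ι → κ → ℝ) :
    ∫ ω, F (f (ξ ω)) (g (η ω)) ∂P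
      = ∑ i, ∑ j, P.real (ξ ⁻¹' (f ⁻¹' {i}) ∩ η ⁻¹' (g ⁻¹' {j})) * F i j := by
  have hm : Measurable fun ω ↦ (f (ξ ω), g (η ω)) := (hf.comp hξ).prodMk (hg.comp hη)
  rw [← integral_map (f := fun z : ι × κ ↦ F z.1 z.2) hm.aemeasurable
      (by fun_prop), integral_fintype .of_finite, Fintype.sum_prod_type]
  refine Finset.sum_congr rfl fun i _ ↦ Finset.sum_congr rfl fun j _ ↦ ?_
  rw [map_measureReal_apply hm (measurableSet_singleton _), smul_eq_mul, ← singleton_prod_singleton,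
    mk_preimage_prod]
  rfl

theorem integral_neg_log_sub_le_mutualInfo_of_finite [Finite ι] [Fintype κ]
    [IsFiniteMeasure P] (hξ : Measurable ξ) (hη : Measurable η) (hf : Measurable f)
    (hg : Measurable g) (C : ι → κ → ℝ) :
    ENNReal.ofReal (∫ ω, (-Real.log (∑ j, P.real (η ⁻¹' (g ⁻¹' {j})) *
      Real.exp (-C (f (ξ ω)) j)) - C (f (ξ ω)) (g (η ω))) ∂P) ≤ mutualInfo P ξ η := by
  classical
  have := Fintype.ofFinite ι
  refine (ENNReal.ofReal_le_ofReal ?_).trans (sum_fiber_le_mutualInfo hf hg)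
  rw [integral_eq_sum_fiber hξ hη hf hg fun i j ↦
    -Real.log (∑ j, P.real (η ⁻¹' (g ⁻¹' {j})) * Real.exp (-C i j)) - C i j]
  refine sum_mul_neg_log_sub_le (fun _ _ _ _ ↦ measureReal_nonneg)
    (fun _ _ _ _ ↦ measureReal_mono inter_subset_right) (fun i _ ↦ ?_) C
  simp only [inter_comm (ξ ⁻¹' _)]
  rw [← sum_image_fiber g (F := fun t ↦ P.real (η ⁻¹' t ∩ ξ ⁻¹' (f ⁻¹' {i}))) (by simp)]
  exact sum_measureReal_preimage_inter hη (isFinPartition_image_fiber hg)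
    (hξ (hf (measurableSet_singleton i)))

end MutualInfo

section Approximation

variable {Y : Type*} [PseudoMetricSpace Y] {δ : ℝ}

lemma exists_finset_forall_exists_dist_lt [CompactSpace Y] (hδ : 0 < δ) :
    ∃ s : Finset Y, ∀ y, ∃ a ∈ s, dist y a < δ := by
  obtain ⟨t, -, htfin, ht⟩ := (isCompact_univ (X := Y)).finite_cover_balls hδ
  refine ⟨htfin.toFinset, fun y ↦ ?_⟩
  simpa using ht (mem_univ y)

lemma exists_simpleFunc_dist_lt [MeasurableSpace Y] [OpensMeasurableSpace Y] {s : Finset Y}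
    (hs : s.Nonempty) {K : Set Y} (hK : ∀ y ∈ K, ∃ a ∈ s, dist y a < δ) :
    ∃ f : SimpleFunc Y Y, (∀ y, f y ∈ s) ∧ ∀ y ∈ K, dist (f y) y < δ := by
  obtain ⟨e, he⟩ := s.countable_toSet.exists_eq_range hs
  have he_mem : ∀ k, e k ∈ s := fun k ↦ Finset.mem_coe.1 (he ▸ mem_range_self k)
  choose! idx hidx using fun a (ha : a ∈ s) ↦ (he ▸ Finset.mem_coe.2 ha : a ∈ range e)
  refine ⟨SimpleFunc.nearestPt e (s.sup idx), fun y ↦ ?_, fun y hy ↦ ?_⟩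
  · exact he_mem _
  · obtain ⟨a, ha, hya⟩ := hK y hy
    have := SimpleFunc.edist_nearestPt_le e y (Finset.le_sup (f := idx) ha)
    rw [hidx a ha, edist_dist, edist_dist, ENNReal.ofReal_le_ofReal_iff dist_nonneg] at this
    exact this.trans_lt (dist_comm a y ▸ hya)

lemma exists_simpleFunc_forall_dist_lt [CompactSpace Y] [MeasurableSpace Y]
    [OpensMeasurableSpace Y] [Nonempty Y] (hδ : 0 < δ) :
    ∃ f : SimpleFunc Y Y, ∀ y, dist (f y) y < δ := by
  obtain ⟨s, hs⟩ := exists_finset_forall_exists_dist_lt (Y := Y) hδ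
  obtain ⟨a, ha, -⟩ := hs (Classical.arbitrary Y)
  obtain ⟨f, -, hf⟩ := exists_simpleFunc_dist_lt ⟨a, ha⟩ fun y (_ : y ∈ univ) ↦ hs y
  exact ⟨f, fun y ↦ hf y (mem_univ y)⟩

lemma exists_simpleFunc_abs_sub_le {A B : Type*} [PseudoMetricSpace A] [CompactSpace A]
    [MeasurableSpace A] [OpensMeasurableSpace A] [Nonempty A] [PseudoMetricSpace B] [CompactSpace B]
    [MeasurableSpace B] [OpensMeasurableSpace B] [Nonempty B] {c : A → B → ℝ}
    (hc : Continuous ↿c) (hδ : 0 < δ) :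
    ∃ (f : SimpleFunc A A) (g : SimpleFunc B B), (∀ a b, |c (f a) b - c a b| ≤ δ) ∧
      ∀ a b, |c (f a) (g b) - c a b| ≤ δ := by
  obtain ⟨r, hr, h⟩ :=
    Metric.uniformContinuous_iff.1 (CompactSpace.uniformContinuous_of_continuous hc) δ hδ
  obtain ⟨f, hf⟩ := exists_simpleFunc_forall_dist_lt (Y := A) hr
  obtain ⟨g, hg⟩ := exists_simpleFunc_forall_dist_lt (Y := B) hr
  refine ⟨f, g, fun a b ↦ ?_, fun a b ↦ ?_⟩
  · exact (h (a := (f a, b)) (b := (a, b)) (by simpa [Prod.dist_eq, hr] using hf a)).le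
  · exact (h (a := (f a, g b)) (b := (a, b)) (by simp [Prod.dist_eq, hf, hg])).le

end Approximation

section LowerBound

variable {Ω A B : Type*} [MeasurableSpace Ω] {P : Measure Ω} [IsProbabilityMeasure P]
  {ξ : Ω → A} {η : Ω → B} {c : A → B → ℝ} {δ : ℝ}

lemma sum_measureReal_mul_exp_neg_mem_expMixtures {κ : Type*} [Fintype κ] [MeasurableSpace κ]
    [MeasurableSingletonClass κ] {h : Ω → κ} (hh : Measurable h) (b : κ → B) :
    (fun a ↦ ∑ j, P.real (h ⁻¹' {j}) * Real.exp (-c a (b j))) ∈ expMixtures c := by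
  have hsum : ∑ j, P.real (h ⁻¹' {j}) = 1 := by
    rw [sum_measureReal_preimage_singleton _ fun j _ ↦ hh (measurableSet_singleton j)]
    simp
  convert convex_expMixtures.sum_mem (t := Finset.univ) (fun j _ ↦ measureReal_nonneg) hsum
    fun j _ ↦ exp_neg_mem_expMixtures (c := c) (b j) using 1
  ext a
  simp

variable [MetricSpace A] [CompactSpace A] [MeasurableSpace A] [BorelSpace A]
  [MetricSpace B] [CompactSpace B] [MeasurableSpace B] [BorelSpace B]

lemma exists_ofReal_integral_sub_le_mutualInfo
    (hξ : Measurable ξ) (hη : Measurable η) (hc : Continuous ↿c) (hδ : 0 < δ) :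
    ∃ W ∈ expMixtures c, ENNReal.ofReal
      (∫ ω, (-Real.log (W (ξ ω)) - c (ξ ω) (η ω)) ∂P - δ) ≤ mutualInfo P ξ η := by
  obtain ⟨ω₀⟩ := nonempty_of_isProbabilityMeasure P
  have : Nonempty A := ⟨ξ ω₀⟩
  have : Nonempty B := ⟨η ω₀⟩
  obtain ⟨f, g, hf, hfg⟩ := exists_simpleFunc_abs_sub_le hc (half_pos hδ)
  have : Finite (range f) := f.finite_range
  have : Fintype (range g) := g.finite_range.fintype
  have hf' : Measurable (rangeFactorization f) := f.measurable.subtype_mk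
  have hg' : Measurable (rangeFactorization g) := g.measurable.subtype_mk
  let W (a : A) : ℝ := ∑ j : range g,
    P.real (η ⁻¹' (rangeFactorization g ⁻¹' {j})) * Real.exp (-c a j)
  have hW : W ∈ expMixtures c :=
    sum_measureReal_mul_exp_neg_mem_expMixtures (P := P) (c := c) (hg'.comp hη) fun j ↦ j
  refine ⟨W, hW, (ENNReal.ofReal_le_ofReal ?_).trans
    (integral_neg_log_sub_le_mutualInfo_of_finite hξ hη hf' hg' fun i j ↦ c i j)⟩
  have hcont : Continuous fun z : A × B ↦ -Real.log (W z.1) - c z.1 z.2 :=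
    ((continuous_neg_log_expMixtures (fun b ↦ hc.comp (Continuous.prodMk_left b)) hW).comp
      continuous_fst).sub hc
  have hint : Integrable (fun ω ↦ -Real.log (W (ξ ω)) - c (ξ ω) (η ω)) P :=
    (integrable_of_continuous hcont (P.map fun ω ↦ (ξ ω, η ω))).comp_measurable (hξ.prodMk hη)
  calc ∫ ω, (-Real.log (W (ξ ω)) - c (ξ ω) (η ω)) ∂P - δ
      = ∫ ω, (-Real.log (W (ξ ω)) - c (ξ ω) (η ω) - δ) ∂P := by
        rw [integral_sub hint (integrable_const δ)]; simp
    _ ≤ _ := integral_mono (hint.sub (integrable_const δ)) ?_ fun ω ↦ ?_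
  · exact (Integrable.of_finite (μ := P.map fun ω ↦
      (rangeFactorization f (ξ ω), rangeFactorization g (η ω)))
      (f := fun z ↦ -Real.log (W z.1) - c z.1 z.2)).comp_measurable
        ((hf'.comp hξ).prodMk (hg'.comp hη))
  · have hlog : -Real.log (W (ξ ω)) ≤ -Real.log (W (f (ξ ω))) + δ / 2 :=
      neg_log_expMixtures_le_add (fun b ↦ by linarith [neg_le_of_abs_le (hf (ξ ω) b)]) hW
    have hcost := le_of_abs_le (hfg (ξ ω) (η ω))
    change _ ≤ -Real.log (W (f (ξ ω))) - c (f (ξ ω)) (g (η ω))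
    linarith

end LowerBound

section RateDistortion

variable {X : Type*} {T : X → X} {c : X → X → ℝ} {ε l s : ℝ} {n : ℕ}

lemma wordCost_le_mul_card [PseudoMetricSpace X]
    (hc : ∀ x y, c x y ≤ if ε ≤ dist x y then l else 0) (x : X) (a : Fin n → X) :
    wordCost T c n x a ≤ l * Nat.card {k : Fin n // ε ≤ dist (T^[k] x) (a k)} := by
  classical
  calc wordCost T c n x a
      ≤ ∑ k : Fin n, if ε ≤ dist (T^[k] x) (a k) then l else 0 :=
        Finset.sum_le_sum fun k _ ↦ hc _ _
    _ = l * Nat.card {k : Fin n // ε ≤ dist (T^[k] x) (a k)} := by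
        rw [← Finset.sum_filter, Finset.sum_const, nsmul_eq_mul, Nat.card_eq_fintype_card,
          Fintype.card_subtype, mul_comm]

variable [MetricSpace X] [CompactSpace X] [MeasurableSpace X] [BorelSpace X]

lemma integrable_wordCost (hT : Continuous T) (hc : Continuous ↿c) (ν : Measure (X × (Fin n → X)))
    [IsFiniteMeasure ν] : Integrable (fun z ↦ wordCost T c n z.1 z.2) ν :=
  integrable_of_continuous (continuous_wordCost hT hc) ν

lemma integral_wordCost_le (hT : Continuous T) (hc : Continuous ↿c) (hc0 : ∀ x y, 0 ≤ c x y)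
    (hl : 0 ≤ l) (hcl : ∀ x y, c x y ≤ if ε ≤ dist x y then l else 0) (hs : 0 ≤ s)
    {ν : Measure (X × (Fin n → X))} [IsFiniteMeasure ν]
    (hν : ∫⁻ p, (Nat.card {k : Fin n // ε ≤ dist (T^[(k : ℕ)] p.1) (p.2 k)} : ℝ≥0∞) ∂ν
      ≤ ENNReal.ofReal (s * n)) :
    ∫ z, wordCost T c n z.1 z.2 ∂ν ≤ l * (s * n) := by
  rw [← ENNReal.ofReal_le_ofReal_iff (by positivity), ofReal_integral_eq_lintegral_ofReal
    (integrable_wordCost hT hc ν) (ae_of_all _ fun z ↦ wordCost_nonneg hc0 z.1 z.2)]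
  calc ∫⁻ z, ENNReal.ofReal (wordCost T c n z.1 z.2) ∂ν
      ≤ ∫⁻ z, ENNReal.ofReal l * Nat.card {k : Fin n // ε ≤ dist (T^[(k : ℕ)] z.1) (z.2 k)} ∂ν := by
        refine lintegral_mono fun z ↦ ?_
        rw [← ENNReal.ofReal_natCast, ← ENNReal.ofReal_mul hl]
        exact ENNReal.ofReal_le_ofReal (wordCost_le_mul_card hcl z.1 z.2)
    _ ≤ ENNReal.ofReal (l * (s * n)) := by
        rw [lintegral_const_mul' _ _ ENNReal.ofReal_ne_top, ENNReal.ofReal_mul hl]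
        gcongr

lemma ofReal_codeRate_sub_le_RDistLInftyS (hT : Continuous T) (hc : Continuous ↿c)
    (hc0 : ∀ x y, 0 ≤ c x y) (hl : 0 ≤ l) (hcl : ∀ x y, c x y ≤ if ε ≤ dist x y then l else 0)
    (μ : Measure X) (hs : 0 < s) :
    ENNReal.ofReal (codeRate T c μ - l * s - s) ≤ RDistLInftyS T μ ε s := by
  refine le_iInf₂ fun n hn ↦ le_iInf₂ fun ν hν ↦ le_iInf₂ fun hmap _ ↦ le_iInf fun hdist ↦ ?_
  have hn' : (0 : ℝ) < n := Nat.cast_pos.2 hn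
  obtain ⟨W, hW, hWν⟩ := exists_ofReal_integral_sub_le_mutualInfo (P := ν) measurable_fst
    measurable_snd (continuous_wordCost (n := n) hT hc) (mul_pos hs hn')
  let p : BlockCode T c := ⟨n, hn, W, hW⟩
  have hrate : codeRate T c μ * n ≤ ∫ z, -Real.log (W z.1) ∂ν := by
    rw [← integral_map (f := fun x ↦ -Real.log (W x)) measurable_fst.aemeasurable
      (p.continuous_neg_log_weight hT hc).aestronglyMeasurable, hmap]
    exact (le_div_iff₀ hn').1 (codeRate_le_rate hc0 p μ)
  have hcost := integral_wordCost_le hT hc hc0 hl hcl hs.le hdist.le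
  have hint : Integrable (fun z ↦ -Real.log (W z.1)) ν :=
    integrable_of_continuous ((p.continuous_neg_log_weight hT hc).comp continuous_fst) ν
  rw [integral_sub hint (integrable_wordCost hT hc ν)] at hWν
  rw [ENNReal.le_div_iff_mul_le (Or.inl (Nat.cast_ne_zero.2 hn.ne')) (Or.inl (by simp)),
    ← ENNReal.ofReal_natCast, ← ENNReal.ofReal_mul' hn'.le]
  refine (ENNReal.ofReal_le_ofReal ?_).trans hWν
  linarith

theorem ofReal_codeRate_le_RDistLInfty (hT : Continuous T) (hc : Continuous ↿c)
    (hc0 : ∀ x y, 0 ≤ c x y) (hl : 0 ≤ l) (hcl : ∀ x y, c x y ≤ if ε ≤ dist x y then l else 0)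
    (μ : Measure X) : ENNReal.ofReal (codeRate T c μ) ≤ RDistLInfty T μ ε := by
  have hlim : Tendsto (fun s ↦ ENNReal.ofReal (codeRate T c μ - l * s - s)) (𝓝[>] 0)
      (𝓝 (ENNReal.ofReal (codeRate T c μ))) := by
    refine Continuous.tendsto' ?_ _ _ (by simp) |>.mono_left nhdsWithin_le_nhds
    exact ENNReal.continuous_ofReal.comp (by fun_prop)
  refine le_of_tendsto hlim ?_
  filter_upwards [self_mem_nhdsWithin] with s hs
  exact (ofReal_codeRate_sub_le_RDistLInftyS hT hc hc0 hl hcl μ hs).trans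
    (le_iSup₂_of_le s hs le_rfl)

end RateDistortion

section BowenDist

variable {X : Type*} [PseudoMetricSpace X] {T : X → X} {ε : ℝ} {n : ℕ}

lemma bowenDist_eq_dist (x y : X) :
    bowenDist T n x y = dist (fun k : Fin n ↦ T^[k] x) fun k : Fin n ↦ T^[k] y := by
  refine le_antisymm (Real.iSup_le (fun k ↦ ?_) dist_nonneg) ?_
  · exact dist_le_pi_dist (fun k : Fin n ↦ T^[k] x) (fun k : Fin n ↦ T^[k] y) k
  · exact (dist_pi_le_iff (Real.iSup_nonneg fun k ↦ dist_nonneg)).2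
      fun k ↦ le_ciSup (f := fun k : Fin n ↦ dist (T^[k] x) (T^[k] y)) (finite_range _).bddAbove k

lemma continuous_orbitWord (hT : Continuous T) (n : ℕ) :
    Continuous fun (x : X) (k : Fin n) ↦ T^[k] x :=
  continuous_pi fun k ↦ hT.iterate k

/-- `E` meets every open Bowen ball of radius `ε`. -/
def IsBowenSpanning (T : X → X) (n : ℕ) (ε : ℝ) (E : Finset X) : Prop :=
  ∀ x, ∃ y ∈ E, bowenDist T n x y < ε

lemma spanNum_univ_le_card {E : Finset X} (hE : IsBowenSpanning T n ε E) :
    spanNum T n ε univ ≤ E.card :=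
  Nat.sInf_le ⟨E, rfl, fun x _ ↦ hE x⟩

variable [CompactSpace X]

lemma exists_isBowenSpanning (hT : Continuous T) (hε : 0 < ε) (n : ℕ) :
    ∃ E : Finset X, IsBowenSpanning T n ε E := by
  have hball : ∀ y : X, {x | bowenDist T n x y < ε} ∈ 𝓝 y := fun y ↦ by
    simp only [bowenDist_eq_dist]
    exact (continuous_orbitWord hT n).continuousAt.preimage_mem_nhds (Metric.ball_mem_nhds _ hε)
  obtain ⟨t, -, ht⟩ := (isCompact_univ (X := X)).elim_nhds_subcover _ fun y _ ↦ hball y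
  exact ⟨t, fun x ↦ by simpa using ht (mem_univ x)⟩

lemma exists_isBowenSpanning_card_eq_spanNum (hT : Continuous T) (hε : 0 < ε) (n : ℕ) :
    ∃ E : Finset X, IsBowenSpanning T n ε E ∧ E.card = spanNum T n ε univ := by
  obtain ⟨E, hE⟩ := exists_isBowenSpanning hT hε n
  obtain ⟨F, hF, hspan⟩ := Nat.sInf_mem (s := {k | ∃ E : Finset X, E.card = k ∧
    ∀ z ∈ univ, ∃ y ∈ E, bowenDist T n z y < ε}) ⟨_, E, rfl, fun x _ ↦ hE x⟩
  exact ⟨F, fun x ↦ hspan x (mem_univ x), hF⟩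

end BowenDist

section UpperBound

variable {X : Type*} [MetricSpace X] [CompactSpace X] [MeasurableSpace X] [BorelSpace X]
  {T : X → X} {ε : ℝ} {n : ℕ}

lemma RDistLInfty_le_ofReal_log_card_div (hn : 0 < n) (μ : Measure X) [IsProbabilityMeasure μ]
    {f : X → Fin n → X} (hf : Measurable f) {S : Finset (Fin n → X)} (hfS : ∀ x, f x ∈ S)
    (hfε : ∀ x, ∀ k : Fin n, dist (T^[k] x) (f x k) < ε) :
    RDistLInfty T μ ε ≤ ENNReal.ofReal (Real.log S.card) / n := by
  classical
  have hF : Measurable fun x ↦ (x, f x) := measurable_id.prodMk hf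
  have hν : IsProbabilityMeasure (μ.map fun x ↦ (x, f x)) :=
    Measure.isProbabilityMeasure_map hF.aemeasurable
  have hfst : (μ.map fun x ↦ (x, f x)).map Prod.fst = μ := by
    rw [Measure.map_map measurable_fst hF]
    exact Measure.map_id
  have hfin : ∃ A : Finset X, μ.map (fun x ↦ (x, f x)) {p | ∀ k, p.2 k ∈ A} = 1 := by
    refine ⟨S.biUnion fun w ↦ Finset.univ.image w, le_antisymm prob_le_one ?_⟩
    refine le_trans ?_ (Measure.le_map_apply hF.aemeasurable _)
    refine (measure_univ (μ := μ)).symm.le.trans (measure_mono fun x _ k ↦ ?_)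
    exact Finset.mem_biUnion.2 ⟨f x, hfS x, Finset.mem_image_of_mem _ (Finset.mem_univ k)⟩
  have hdist : ∫⁻ p, (Nat.card {k : Fin n // ε ≤ dist (T^[(k : ℕ)] p.1) (p.2 k)} : ℝ≥0∞)
      ∂(μ.map fun x ↦ (x, f x)) = 0 := by
    refine le_antisymm ((lintegral_map_le _ _).trans_eq ?_) zero_le
    refine lintegral_eq_zero_of_ae_eq_zero (ae_of_all _ fun x ↦ ?_)
    have : IsEmpty {k : Fin n // ε ≤ dist (T^[k] x) (f x k)} :=
      isEmpty_subtype _ |>.2 fun k ↦ (hfε x k).not_ge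
    simp
  refine iSup₂_le fun s hs ↦ iInf₂_le_of_le n hn <| iInf₂_le_of_le _ hν <|
    iInf₂_le_of_le hfst hfin <| iInf_le_of_le ?_ ?_
  · rw [hdist, ENNReal.ofReal_pos]
    positivity
  · gcongr
    refine mutualInfo_le_log_card measurable_fst measurable_snd ?_
    exact (ae_map_iff hF.aemeasurable (measurable_snd S.measurableSet)).2 (ae_of_all _ hfS)

lemma RDistLInfty_le_ofReal_log_spanNum_div (hT : Continuous T) (hε : 0 < ε) (hn : 0 < n)
    (μ : Measure X) [IsProbabilityMeasure μ] :
    RDistLInfty T μ ε ≤ ENNReal.ofReal (Real.log (spanNum T n ε univ)) / n := by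
  classical
  obtain ⟨E, hE, hcard⟩ := exists_isBowenSpanning_card_eq_spanNum hT hε n
  let w (x : X) (k : Fin n) : X := T^[k] x
  have hnear : ∀ a ∈ range w, ∃ b ∈ E.image w, dist a b < ε := by
    rintro _ ⟨x, rfl⟩
    obtain ⟨y, hy, hxy⟩ := hE x
    exact ⟨w y, Finset.mem_image_of_mem w hy, bowenDist_eq_dist (T := T) (n := n) x y ▸ hxy⟩
  obtain ⟨x⟩ := nonempty_of_isProbabilityMeasure μ
  obtain ⟨a, ha, -⟩ := hnear _ (mem_range_self x)
  obtain ⟨f, hfE, hf⟩ := exists_simpleFunc_dist_lt ⟨a, ha⟩ hnear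
  have hfw : Measurable (f ∘ w) := f.measurable.comp (continuous_orbitWord hT n).measurable
  refine (RDistLInfty_le_ofReal_log_card_div hn μ hfw (fun x ↦ hfE _) fun x k ↦ ?_).trans ?_
  · rw [dist_comm]
    exact (dist_le_pi_dist _ _ k).trans_lt (hf _ (mem_range_self x))
  · gcongr
    · exact Nat.cast_pos.2 (Finset.card_pos.2 ⟨a, ha⟩)
    · exact hcard ▸ Finset.card_image_le

theorem RDistLInfty_le_spanGrowth (hT : Continuous T) (hε : 0 < ε) (μ : Measure X)
    [IsProbabilityMeasure μ] : RDistLInfty T μ ε ≤ spanGrowth T ε := by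
  refine le_trans (le_liminf_of_le ?_ ?_) liminf_le_limsup
  · isBoundedDefault
  · filter_upwards [eventually_gt_atTop 0] with n hn
    exact RDistLInfty_le_ofReal_log_spanNum_div hT hε hn μ

end UpperBound

section Counting

variable {X : Type*} [PseudoMetricSpace X] {T : X → X} {ε : ℝ} {n : ℕ}

lemma spanNum_univ_le_of_forall_separated (hε : 0 < ε) {K : ℕ}
    (hK : ∀ S : Finset X, (S : Set X).Pairwise (fun x y ↦ ε ≤ bowenDist T n x y) → S.card ≤ K) :
    spanNum T n ε univ ≤ K := by
  classical
  obtain ⟨S, -, hcard, hS⟩ := Nat.sSup_mem (s := {k | ∃ F : Finset X, (F : Set X) ⊆ univ ∧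
      F.card = k ∧ ∀ x ∈ F, ∀ y ∈ F, x ≠ y → ε ≤ bowenDist T n x y}) ⟨0, ∅, by simp⟩
    ⟨K, by rintro _ ⟨F, -, rfl, hF⟩; exact hK F hF⟩
  refine (spanNum_univ_le_card fun x ↦ ?_).trans (hK S hS)
  by_contra! hx
  have hxS : x ∉ S := fun h ↦ by
    have := hx x h
    rw [bowenDist_eq_dist, dist_self] at this
    exact this.not_gt hε
  have hsymm : Std.Symm fun x y : X ↦ ε ≤ bowenDist T n x y :=
    ⟨fun y z h ↦ by rwa [bowenDist_eq_dist, dist_comm, ← bowenDist_eq_dist]⟩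
  have hins : ((insert x S : Finset X) : Set X).Pairwise fun x y ↦ ε ≤ bowenDist T n x y := by
    rw [Finset.coe_insert]
    exact Set.Pairwise.insert_of_symm hS fun y hy _ ↦ hx y hy
  have hle : (insert x S).card ≤ S.card := hcard ▸ le_csSup
    ⟨K, by rintro _ ⟨F, -, rfl, hF⟩; exact hK F hF⟩
    ⟨_, subset_univ _, rfl, hins⟩
  rw [Finset.card_insert_of_notMem hxS] at hle
  exact absurd hle (Nat.not_succ_le_self _)

lemma sum_prod_le_sum_pow {α κ : Type*} [Fintype κ] {S : Finset α} {f : α → Fin n → κ}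
    (hf : InjOn f S) {w : κ → ℝ} (hw : ∀ j, 0 ≤ w j) :
    ∑ x ∈ S, ∏ k, w (f x k) ≤ (∑ j, w j) ^ n := by
  classical
  calc ∑ x ∈ S, ∏ k, w (f x k)
      = ∑ z ∈ S.image f, ∏ k, w (z k) :=
        (Finset.sum_image (g := f) (f := fun z ↦ ∏ k, w (z k)) hf).symm
    _ ≤ ∑ z : Fin n → κ, ∏ k, w (z k) :=
        Finset.sum_le_sum_of_subset_of_nonneg (Finset.subset_univ _)
          fun z _ _ ↦ Finset.prod_nonneg fun k _ ↦ hw (z k)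
    _ = (∑ j, w j) ^ n := (Fintype.sum_pow w n).symm

lemma injOn_of_forall_dist_lt {κ : Type*} {S : Finset X} {f : X → Fin n → κ} (hε : 0 < ε)
    (hf : ∀ x y k, f x k = f y k → dist (T^[k] x) (T^[k] y) < ε)
    (hS : (S : Set X).Pairwise fun x y ↦ ε ≤ bowenDist T n x y) : InjOn f S := by
  intro x hx y hy hxy
  by_contra hne
  refine (hS hx hy hne).not_gt ?_
  rw [bowenDist_eq_dist, dist_pi_lt_iff hε]
  exact fun k ↦ hf x y k (congrFun hxy k)

variable {c : X → X → ℝ} {l : ℝ} {A S : Finset X} {W : X → ℝ}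

lemma sum_exp_neg_wordCost_le (hε : 0 < ε) (hA : ∀ x, ∃ a ∈ A, dist x a < ε)
    (hc : ∀ x y, 0 ≤ c x y) (hcl : ∀ x y, 2 * ε ≤ dist x y → l ≤ c x y)
    (hS : (S : Set X).Pairwise fun x y ↦ 4 * ε ≤ bowenDist T n x y) (a : Fin n → X) :
    ∑ x ∈ S, Real.exp (-wordCost T c n x a) ≤ (1 + A.card * Real.exp (-l)) ^ n := by
  classical
  choose p hpA hp using hA
  let code (x : X) (k : Fin n) : Option A :=
    if 2 * ε ≤ dist (T^[k] x) (a k) then some ⟨p (T^[k] x), hpA _⟩ else none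
  let w (o : Option A) : ℝ := o.elim 1 fun _ ↦ Real.exp (-l)
  have hw : ∀ o, 0 ≤ w o := fun o ↦ by cases o <;> simp [w, Real.exp_nonneg]
  have hinj : InjOn code S := by
    refine injOn_of_forall_dist_lt (by positivity) (fun x y k hxy ↦ ?_) hS
    simp only [code] at hxy
    split_ifs at hxy with hx hy hy
    · have heq : p (T^[k] x) = p (T^[k] y) := by simpa using hxy
      have hy' := heq ▸ hp (T^[k] y)
      linarith [hp (T^[k] x), dist_triangle_right (T^[k] x) (T^[k] y) (p (T^[k] x))]
    · linarith [dist_triangle_right (T^[k] x) (T^[k] y) (a k)]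
  have hle : ∀ x, Real.exp (-wordCost T c n x a) ≤ ∏ k, w (code x k) := by
    intro x
    rw [wordCost, ← Finset.sum_neg_distrib, Real.exp_sum]
    refine Finset.prod_le_prod (fun k _ ↦ Real.exp_nonneg _) fun k _ ↦ ?_
    by_cases h : 2 * ε ≤ dist (T^[k] x) (a k)
    · simpa [code, w, h] using hcl _ _ h
    · simpa [code, w, h] using hc _ _
  calc ∑ x ∈ S, Real.exp (-wordCost T c n x a)
      ≤ ∑ x ∈ S, ∏ k, w (code x k) := Finset.sum_le_sum fun x _ ↦ hle x
    _ ≤ (∑ o, w o) ^ n := by simpa using sum_prod_le_sum_pow hinj hw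
    _ = (1 + A.card * Real.exp (-l)) ^ n := by simp [w, Fintype.sum_option]

lemma sum_wordMixtures_le (hε : 0 < ε) (hA : ∀ x, ∃ a ∈ A, dist x a < ε)
    (hc : ∀ x y, 0 ≤ c x y) (hcl : ∀ x y, 2 * ε ≤ dist x y → l ≤ c x y)
    (hS : (S : Set X).Pairwise fun x y ↦ 4 * ε ≤ bowenDist T n x y) (hW : W ∈ wordMixtures T c n) :
    ∑ x ∈ S, W x ≤ (1 + A.card * Real.exp (-l)) ^ n := by
  have hlin : IsLinearMap ℝ fun V : X → ℝ ↦ ∑ x ∈ S, V x :=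
    ⟨fun U V ↦ by simp [Finset.sum_add_distrib], fun r V ↦ by simp [Finset.mul_sum]⟩
  exact expMixtures_subset (convex_halfSpace_le hlin _)
    (fun a ↦ sum_exp_neg_wordCost_le hε hA hc hcl hS a) hW

theorem spanNum_univ_le_exp (hε : 0 < ε) (hA : ∀ x, ∃ a ∈ A, dist x a < ε)
    (hc : ∀ x y, 0 ≤ c x y) (hcl : ∀ x y, 2 * ε ≤ dist x y → l ≤ c x y)
    (hAl : A.card * Real.exp (-l) ≤ 1) (hW : W ∈ wordMixtures T c n) {C : ℝ}
    (hC : ∀ x, -Real.log (W x) ≤ C) :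
    (spanNum T n (4 * ε) univ : ℝ) ≤ Real.exp (C + n) := by
  refine (Nat.cast_le.2 (spanNum_univ_le_of_forall_separated (by positivity) fun S hS ↦ ?_)).trans
    (Nat.floor_le (Real.exp_nonneg _))
  refine Nat.le_floor ?_
  have hWC : ∀ x ∈ S, Real.exp (-C) ≤ W x := fun x _ ↦
    (Real.le_log_iff_exp_le (expMixtures_pos hW x)).1 (by linarith [hC x])
  have hbase : 1 + A.card * Real.exp (-l) ≤ Real.exp 1 := by linarith [Real.add_one_le_exp (1 : ℝ)]
  have hsum : S.card * Real.exp (-C) ≤ Real.exp n :=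
    calc S.card * Real.exp (-C) ≤ ∑ x ∈ S, W x := by
          simpa using Finset.card_nsmul_le_sum S W _ hWC
      _ ≤ (1 + A.card * Real.exp (-l)) ^ n := sum_wordMixtures_le hε hA hc hcl hS hW
      _ ≤ Real.exp 1 ^ n := by gcongr
      _ = Real.exp n := Real.exp_one_pow n
  calc (S.card : ℝ) = Real.exp C * (S.card * Real.exp (-C)) := by
        rw [mul_left_comm, ← Real.exp_add, add_neg_cancel, Real.exp_zero, mul_one]
    _ ≤ Real.exp C * Real.exp n := by gcongr
    _ = Real.exp (C + n) := (Real.exp_add C n).symm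

end Counting

section Empirical

variable {X : Type*} [MeasurableSpace X] {T : X → X}

lemma empMeas_univ (T : X → X) (n : ℕ) (x : X) :
    empMeas T n x univ = (n : ℝ≥0∞)⁻¹ * n := by
  simp [empMeas]

instance (n : ℕ) (x : X) : IsFiniteMeasure (empMeas T n x) :=
  ⟨(empMeas_univ T n x).trans_lt ((ENNReal.inv_mul_le_one _).trans_lt ENNReal.one_lt_top)⟩

lemma isProbabilityMeasure_empMeas {n : ℕ} (hn : n ≠ 0) (x : X) :
    IsProbabilityMeasure (empMeas T n x) :=
  ⟨(empMeas_univ T n x).trans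
    (ENNReal.inv_mul_cancel (mod_cast hn) (ENNReal.natCast_ne_top n))⟩

lemma integral_empMeas {f : X → ℝ} (hf : StronglyMeasurable f) (n : ℕ) (x : X) :
    ∫ y, f y ∂(empMeas T n x) = birkhoffAverage ℝ T f n x := by
  rw [empMeas, integral_smul_measure,
    integral_finsetSum_measure fun k _ ↦ integrable_dirac' hf enorm_lt_top]
  simp [integral_dirac' _ _ hf, birkhoffAverage, birkhoffSum]

variable [TopologicalSpace X] [BorelSpace X] [HasOuterApproxClosed X]

lemma measurePreserving_of_tendsto_birkhoffAverage (hT : Continuous T) {ι : Type*} {u : Filter ι}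
    [u.NeBot] {N : ι → ℕ} (hN : Tendsto N u atTop) {x : ι → X} {μ : FiniteMeasure X}
    (h : ∀ f : X → ℝ, Continuous f → Tendsto (fun i ↦ birkhoffAverage ℝ T f (N i) (x i)) u
      (𝓝 (∫ x, f x ∂(μ : Measure X)))) :
    MeasurePreserving T (μ : Measure X) μ := by
  refine ⟨hT.measurable, ?_⟩
  refine ext_of_forall_integral_eq_of_IsFiniteMeasure fun f ↦ ?_
  rw [integral_map hT.aemeasurable f.continuous.aestronglyMeasurable]
  have hdist (i : ι) : dist (birkhoffAverage ℝ T (f ∘ T) (N i) (x i))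
      (birkhoffAverage ℝ T f (N i) (x i)) ≤ 2 * ‖f‖ / N i := by
    have hcomp : birkhoffAverage ℝ T (f ∘ T) (N i) (x i)
        = birkhoffAverage ℝ T f (N i) (T (x i)) := by
      simp only [birkhoffAverage, birkhoffSum, Function.comp_apply, ← Function.iterate_succ_apply',
        ← Function.iterate_succ_apply]
    rw [hcomp, dist_birkhoffAverage_apply_birkhoffAverage]
    gcongr
    exact f.dist_le_two_norm _ _
  have hzero : Tendsto (fun i ↦ 2 * ‖f‖ / N i) u (𝓝 0) :=
    (tendsto_const_div_atTop_nhds_zero_nat _).comp hN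
  exact tendsto_nhds_unique (h _ (f.continuous.comp hT)) <|
    (tendsto_iff_of_dist (squeeze_zero (fun _ ↦ dist_nonneg) hdist hzero)).2 (h f f.continuous)

variable [CompactSpace X] [T2Space X]

lemma exists_tendsto_birkhoffAverage (hT : Continuous T) {u : Ultrafilter (ℕ × X)}
    (hu : Tendsto Prod.fst (u : Filter (ℕ × X)) atTop) :
    ∃ μ ∈ invariantMeasures T, ∀ f : X → ℝ, Continuous f →
      Tendsto (fun p : ℕ × X ↦ birkhoffAverage ℝ T f p.1 p.2) u
        (𝓝 (∫ x, f x ∂(μ : Measure X))) := by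
  let E (p : ℕ × X) : FiniteMeasure X := ⟨empMeas T p.1 p.2, inferInstance⟩
  have hmass : ∀ᶠ p in (u : Filter (ℕ × X)), (E p).mass = 1 := by
    filter_upwards [hu.eventually_ne_atTop 0] with p hp
    rw [← ENNReal.coe_inj, FiniteMeasure.ennreal_mass, ENNReal.coe_one]
    exact (isProbabilityMeasure_empMeas hp p.2).measure_univ
  obtain ⟨μ, hμ1, hμ⟩ := (isCompact_setOfPred_finiteMeasure_eq_of_compactSpace X 1)
    |>.ultrafilter_le_nhds (u.map E) (le_principal_iff.2 hmass)
  have hint (f : X → ℝ) (hf : Continuous f) :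
      Tendsto (fun p : ℕ × X ↦ birkhoffAverage ℝ T f p.1 p.2) u
        (𝓝 (∫ x, f x ∂(μ : Measure X))) := by
    simp only [← integral_empMeas hf.stronglyMeasurable]
    exact ((continuous_integral_finiteMeasure hf).tendsto μ).comp hμ
  refine ⟨μ, ⟨measurePreserving_of_tendsto_birkhoffAverage hT hu hint, ⟨?_⟩⟩, hint⟩
  rw [← FiniteMeasure.ennreal_mass, hμ1, ENNReal.coe_one]

theorem eventually_forall_birkhoffSum_le (hT : Continuous T) {f : X → ℝ} (hf : Continuous f)
    {a b : ℝ} (ha : ∀ μ ∈ invariantMeasures T, ∫ x, f x ∂(μ : Measure X) ≤ a) (hab : a < b) :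
    ∀ᶠ n : ℕ in atTop, ∀ x, birkhoffSum T f n x ≤ n * b := by
  have hlt : ∀ᶠ p : ℕ × X in comap Prod.fst atTop, birkhoffAverage ℝ T f p.1 p.2 < b := by
    refine mem_iff_ultrafilter.2 fun u hu ↦ ?_
    obtain ⟨μ, hμ, hlim⟩ := exists_tendsto_birkhoffAverage hT (tendsto_iff_comap.2 hu)
    exact (hlim f hf).eventually_lt_const ((ha μ hμ).trans_lt hab)
  filter_upwards [eventually_comap.1 hlt, eventually_gt_atTop 0] with n hn hpos x
  have havg : (n : ℝ)⁻¹ * birkhoffSum T f n x < b := hn (n, x) rfl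
  exact ((inv_mul_lt_iff₀ (mod_cast hpos)).1 havg).le

end Empirical

section LogScale

lemma tendsto_log_one_div_nhdsGT_zero :
    Tendsto (fun ε : ℝ ↦ Real.log (1 / ε)) (𝓝[>] 0) atTop := by
  simpa only [one_div, Function.comp_def] using Real.tendsto_log_atTop.comp tendsto_inv_nhdsGT_zero

lemma tendsto_const_mul_nhdsGT_zero {a : ℝ} (ha : 0 < a) :
    Tendsto (fun ε ↦ a * ε) (𝓝[>] 0) (𝓝[>] 0) := by
  refine tendsto_nhdsWithin_iff.2 ⟨?_, ?_⟩
  · exact ((continuous_const_mul a).tendsto' 0 0 (mul_zero a)).mono_left nhdsWithin_le_nhds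
  · filter_upwards [self_mem_nhdsWithin] with ε hε using mul_pos ha hε

lemma tendsto_log_one_div_div_log_one_div_const_mul {a : ℝ} (ha : 0 < a) :
    Tendsto (fun ε ↦ Real.log (1 / ε) / Real.log (1 / (a * ε))) (𝓝[>] 0) (𝓝 1) := by
  have hlim : Tendsto (fun L ↦ (1 - Real.log a / L)⁻¹) atTop (𝓝 1) := by
    simpa using ((tendsto_const_nhds (x := Real.log a)).div_atTop tendsto_id).const_sub 1
      |>.inv₀ (by simp)
  refine (hlim.comp tendsto_log_one_div_nhdsGT_zero).congr' ?_
  filter_upwards [self_mem_nhdsWithin, tendsto_log_one_div_nhdsGT_zero.eventually_ne_atTop 0]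
    with ε (hε : 0 < ε) hL
  have hlog : Real.log (1 / (a * ε)) = Real.log (1 / ε) - Real.log a := by
    rw [one_div, one_div, Real.log_inv, Real.log_inv, Real.log_mul ha.ne' hε.ne']
    ring
  rw [Function.comp_apply, hlog, one_sub_div hL, inv_div]

theorem liminf_div_log_le_liminf_div_log {F g : ℝ → ℝ≥0∞} {a : ℝ} (ha : 0 < a) {C : ℝ≥0∞}
    (hC : C ≠ ∞) (h : ∀ᶠ ε in 𝓝[>] 0, F (a * ε) ≤ g ε + C) :
    liminf (fun ε ↦ F ε / ENNReal.ofReal (Real.log (1 / ε))) (𝓝[>] 0) ≤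
      liminf (fun ε ↦ g ε / ENNReal.ofReal (Real.log (1 / ε))) (𝓝[>] 0) := by
  set L : ℝ → ℝ≥0∞ := fun ε ↦ ENNReal.ofReal (Real.log (1 / ε))
  have hLtop : Tendsto L (𝓝[>] 0) (𝓝 ∞) :=
    ENNReal.tendsto_ofReal_atTop.comp tendsto_log_one_div_nhdsGT_zero
  have hpos : ∀ᶠ ε in 𝓝[>] 0, 0 < Real.log (1 / ε) :=
    tendsto_log_one_div_nhdsGT_zero.eventually_gt_atTop 0
  have hratio : limsup (fun ε ↦ L ε / L (a * ε)) (𝓝[>] 0) = 1 := by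
    refine Tendsto.limsup_eq ?_
    rw [← ENNReal.ofReal_one]
    refine (ENNReal.tendsto_ofReal (tendsto_log_one_div_div_log_one_div_const_mul ha)).congr' ?_
    filter_upwards [(tendsto_const_mul_nhdsGT_zero ha).eventually hpos] with ε hε
      using ENNReal.ofReal_div_of_pos hε
  calc liminf (fun ε ↦ F ε / L ε) (𝓝[>] 0)
      ≤ liminf (fun ε ↦ F (a * ε) / L (a * ε)) (𝓝[>] 0) :=
        liminf_le_liminf_of_le (tendsto_const_mul_nhdsGT_zero ha)
    _ ≤ liminf ((fun ε ↦ L ε / L (a * ε)) * fun ε ↦ (g ε + C) / L ε) (𝓝[>] 0) := by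
        refine liminf_le_liminf ?_
        filter_upwards [h, hpos] with ε hε hLε
        refine (ENNReal.div_le_div_right hε _).trans_eq ?_
        rw [Pi.mul_apply, mul_comm (L ε / L (a * ε)), ← mul_div_assoc,
          ENNReal.div_mul_cancel (ENNReal.ofReal_pos.2 hLε).ne' ENNReal.ofReal_ne_top]
    _ ≤ limsup (fun ε ↦ L ε / L (a * ε)) (𝓝[>] 0)
        * liminf (fun ε ↦ (g ε + C) / L ε) (𝓝[>] 0) :=
        ENNReal.liminf_mul_le (by simp [hratio]) (by simp [hratio])
    _ = liminf (fun ε ↦ g ε / L ε) (𝓝[>] 0) := by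
        have hC0 : Tendsto (fun ε ↦ C / L ε) (𝓝[>] 0) (𝓝 0) := by
          simpa using ENNReal.Tendsto.const_div hLtop (Or.inr hC)
        simp only [hratio, one_mul, ENNReal.add_div]
        exact ENNReal.liminf_add_of_right_tendsto_zero hC0 _

end LogScale

section CutoffCost

variable {X : Type*} [PseudoMetricSpace X] {ε l : ℝ}

/-- A continuous approximation of the cost `l · 𝟙{ε ≤ dist x y}`: it vanishes when `dist x y ≤ ε`
and equals `l` when `2 * ε ≤ dist x y`. -/
def cutoffCost (ε l : ℝ) (x y : X) : ℝ :=
  l * min 1 (max 0 (dist x y / ε - 1))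

lemma continuous_cutoffCost (ε l : ℝ) : Continuous ↿(cutoffCost (X := X) ε l) := by
  change Continuous fun p : X × X ↦ l * min 1 (max 0 (dist p.1 p.2 / ε - 1))
  fun_prop

lemma cutoffCost_mem_Icc (hl : 0 ≤ l) (x y : X) : cutoffCost ε l x y ∈ Icc 0 l :=
  ⟨mul_nonneg hl (le_min zero_le_one (le_max_left _ _)),
    mul_le_of_le_one_right hl (min_le_left _ _)⟩

lemma cutoffCost_le_ite (hε : 0 < ε) (hl : 0 ≤ l) (x y : X) :
    cutoffCost ε l x y ≤ if ε ≤ dist x y then l else 0 := by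
  split_ifs with h
  · exact (cutoffCost_mem_Icc hl x y).2
  · have hdist : dist x y / ε - 1 ≤ 0 := sub_nonpos.2 ((div_le_one hε).2 (not_le.1 h).le)
    simp [cutoffCost, max_eq_left hdist]

lemma cutoffCost_eq_of_two_mul_le_dist (hε : 0 < ε) {x y : X} (h : 2 * ε ≤ dist x y) :
    cutoffCost ε l x y = l := by
  have hdist : 1 ≤ dist x y / ε - 1 := by linarith [(le_div_iff₀ hε).2 h]
  rw [cutoffCost, min_eq_left (le_max_of_le_right hdist), mul_one]

end CutoffCost

section GrowthBound

variable {X : Type*} {T : X → X} {ε : ℝ}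

lemma spanGrowth_le_of_eventually_le_exp [PseudoMetricSpace X] {b : ℝ}
    (h : ∀ᶠ n : ℕ in atTop, (spanNum T n ε univ : ℝ) ≤ Real.exp (n * b)) :
    spanGrowth T ε ≤ ENNReal.ofReal b := by
  refine limsup_le_of_le (by isBoundedDefault) ?_
  filter_upwards [h] with n hn
  refine ENNReal.div_le_of_le_mul' ?_
  rw [← ENNReal.ofReal_natCast, ← ENNReal.ofReal_mul n.cast_nonneg]
  rcases (spanNum T n ε univ).eq_zero_or_pos with h0 | h0
  · simp [h0]
  · exact ENNReal.ofReal_le_ofReal ((Real.log_le_iff_le_exp (mod_cast h0)).2 hn)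

lemma spanGrowth_of_isEmpty [PseudoMetricSpace X] [IsEmpty X] (T : X → X) (ε : ℝ) :
    spanGrowth T ε = 0 := by
  have hspan (n : ℕ) : spanNum T n ε univ = 0 :=
    Nat.le_zero.1 (spanNum_univ_le_card (E := ∅) isEmptyElim)
  simp [spanGrowth, hspan]

variable [MetricSpace X] [CompactSpace X] [MeasurableSpace X] [BorelSpace X] [Nonempty X] {l : ℝ}

lemma BlockCode.eventually_exists_neg_log_le {c : X → X → ℝ} (hT : Continuous T)
    (hc : Continuous ↿c) (hcl : ∀ x y, c x y ∈ Icc 0 l) (p : BlockCode T c) {a b : ℝ}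
    (hp : ∀ μ ∈ invariantMeasures T, p.rate μ ≤ a) (hab : a < b) :
    ∀ᶠ n : ℕ in atTop, ∃ W ∈ wordMixtures T c n, ∀ x, -Real.log (W x) ≤ n * b := by
  have hm : (0 : ℝ) < p.length := mod_cast p.length_pos
  obtain ⟨b', hab', hbb'⟩ := exists_between hab
  have hsum := eventually_forall_birkhoffSum_le hT (p.continuous_neg_log_weight hT hc)
    (fun μ hμ ↦ (div_le_iff₀ hm).1 (hp μ hμ)) (mul_lt_mul_of_pos_right hab' hm)
  have hlarge : ∀ᶠ n : ℕ in atTop, 2 * p.length * l + Real.log p.length ≤ n * (b - b') :=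
    (tendsto_natCast_atTop_atTop.atTop_mul_const (sub_pos.2 hbb')).eventually_ge_atTop _
  filter_upwards [hsum, hlarge, eventually_ge_atTop p.length] with n hsum hlarge hn
  obtain ⟨W, hW, hWx⟩ := exists_mul_neg_log_le_birkhoffSum hcl p.weight_mem hn
  refine ⟨W, hW, fun x ↦ le_of_mul_le_mul_left ?_ hm⟩
  calc p.length * -Real.log (W x)
      ≤ p.length * (2 * p.length * l + Real.log p.length)
        + birkhoffSum T (fun y ↦ -Real.log (p.weight y)) n x := hWx x
    _ ≤ p.length * (n * (b - b')) + n * (b' * p.length) := by gcongr; exact hsum x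
    _ = p.length * (n * b) := by ring

lemma exists_blockCode_cutoffCost_rate_le (hT : Continuous T) (hε : 0 < ε) (hl : 0 ≤ l)
    {R : ℝ≥0∞} (hR : R ≠ ∞)
    (h : ∀ μ : Measure X, IsProbabilityMeasure μ → Ergodic T μ → RDistLInfty T μ ε ≤ R)
    {δ : ℝ} (hδ : 0 < δ) :
    ∃ p : BlockCode T (cutoffCost ε l), ∀ μ ∈ invariantMeasures T, p.rate μ ≤ R.toReal + δ := by
  have hc := continuous_cutoffCost (X := X) ε l
  have hc0 (x y : X) : 0 ≤ cutoffCost ε l x y := (cutoffCost_mem_Icc hl x y).1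
  refine exists_blockCode_forall_rate_le hT hc
    (fun μ hμ ↦ codeRate_le_of_forall_ergodic hT hc hc0 (fun ν hν hνerg ↦ ?_) hμ) hδ
  rw [← ENNReal.ofReal_le_iff_le_toReal hR]
  exact (ofReal_codeRate_le_RDistLInfty hT hc hc0 hl (cutoffCost_le_ite hε hl) ν).trans
    (h ν hν hνerg)

theorem spanGrowth_le_add_two (hT : Continuous T) (hε : 0 < ε) {R : ℝ≥0∞}
    (h : ∀ μ : Measure X, IsProbabilityMeasure μ → Ergodic T μ → RDistLInfty T μ ε ≤ R) :
    spanGrowth T (4 * ε) ≤ R + 2 := by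
  rcases eq_or_ne R ∞ with rfl | hR
  · simp
  obtain ⟨A, hA⟩ := exists_finset_forall_exists_dist_lt (Y := X) hε
  have hA0 : A.Nonempty := let ⟨a, ha, _⟩ := hA (Classical.arbitrary X); ⟨a, ha⟩
  have hAl : A.card * Real.exp (-Real.log A.card) ≤ 1 := by
    have hcard : (0 : ℝ) < A.card := mod_cast hA0.card_pos
    rw [Real.exp_neg, Real.exp_log hcard, mul_inv_cancel₀ hcard.ne']
  have hl : 0 ≤ Real.log A.card := Real.log_natCast_nonneg _
  obtain ⟨p, hp⟩ := exists_blockCode_cutoffCost_rate_le hT hε hl hR h one_half_pos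
  have hgrowth : spanGrowth T (4 * ε) ≤ ENNReal.ofReal (R.toReal + 2) := by
    refine spanGrowth_le_of_eventually_le_exp ?_
    filter_upwards [p.eventually_exists_neg_log_le hT (continuous_cutoffCost _ _)
      (cutoffCost_mem_Icc hl) hp (b := R.toReal + 1) (by linarith)] with n ⟨W, hW, hWx⟩
    refine (spanNum_univ_le_exp hε hA (fun x y ↦ (cutoffCost_mem_Icc hl x y).1)
      (fun x y hxy ↦ (cutoffCost_eq_of_two_mul_le_dist hε hxy).ge) hAl hW hWx).trans_eq ?_
    ring_nf
  simpa [ENNReal.ofReal_add, ENNReal.ofReal_toReal hR] using hgrowth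

end GrowthBound

end MMD

/-- Theorem 1.1 (lower part): the variational principle for the lower metric mean dimension
in terms of the `L^∞` rate distortion function ranges only over ergodic measures. -/
theorem stmt1 {X : Type*} [MetricSpace X] [CompactSpace X] [MeasurableSpace X] [BorelSpace X]
    (T : X → X) (hT : Continuous T) :
    mdimMLower T = Filter.liminf (fun ε : ℝ =>
      (⨆ (μ : Measure X) (_ : IsProbabilityMeasure μ) (_ : Ergodic T μ), RDistLInfty T μ ε)
        / ENNReal.ofReal (Real.log (1 / ε))) (nhdsWithin 0 (Set.Ioi 0)) := by
  refine le_antisymm ?_ ?_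
  · refine liminf_div_log_le_liminf_div_log four_pos (C := 2) ENNReal.ofNat_ne_top ?_
    filter_upwards [self_mem_nhdsWithin] with ε hε
    cases isEmpty_or_nonempty X
    · simp [spanGrowth_of_isEmpty]
    · exact spanGrowth_le_add_two hT hε fun μ hμ hμerg ↦
        le_iSup_of_le μ (le_iSup_of_le hμ (le_iSup_of_le hμerg le_rfl))
  · refine liminf_le_liminf ?_
    filter_upwards [self_mem_nhdsWithin] with ε hε
    gcongr
    exact iSup_le fun μ ↦ iSup_le fun _ ↦ iSup_le fun _ ↦ RDistLInfty_le_spanGrowth hT hε μ
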